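/- Let Φ = {φ_a}_{a∈A} be a self-conformal IFS on ℝ^d with attractor X and coding map Π, let {A_b}_{b∈A} be a family of subsets of A each containing at least two elements, and suppose there is c₁ > 0 such that for every b ∈ A and all distinct a, a′ ∈ A_b, dist(φ_a(X), φ_{a′}(X)) ≥ c₁. For ω = (b_n)_{n≥1} ∈ A^ℕ let Σ_ω = {(a_n)_{n≥1} : a_n ∈ A_{b_n} for all n}, let X_ω = Π(Σ_ω), and let σ denote the left shift σ((b_n)_{n≥1}) = (b_{n+1})_{n≥1}. Then there exist M ∈ ℕ and D ≥ 1 such that for every ω = (b_n) ∈ A^ℕ, every r ∈ (0, c₁/2) and every x ∈ X_ω, there are (a_n)_{n≥1} ∈ Σ_ω and natural numbers N₁ < N₂ with: (1) N₂ − N₁ ≤ M; (2) r/D ≤ diam(φ_{a_1⋯a_{N_1}}(X_{σ^{N_1}ω})) ≤ D·r and r/D ≤ diam(φ_{a_1⋯a_{N_2}}(X_{σ^{N_2}ω})) ≤ D·r; (3) B(x,2r) ∩ X_ω ⊆ φ_{a_1⋯a_{N_1}}(X_{σ^{N_1}ω}); (4) φ_{a_1⋯a_{N_2}}(X_{σ^{N_2}ω})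 ⊆ B(x,r). -/

import Mathlib

noncomputable section
open MeasureTheory Metric Filter Topology

variable {E : Type*} [NormedAddCommGroup E] [NormedSpace ℝ E]

/-- `f` is a contraction with ratio `r ∈ (0,1)`. -/
def IsContractionWith (r : ℝ) (f : E → E) : Prop :=
  0 < r ∧ r < 1 ∧ ∀ x y, ‖f x - f y‖ ≤ r * ‖x - y‖

/-- `f` is a contracting similarity with ratio `r ∈ (0,1)`. -/
def IsSimilarityWith (r : ℝ) (f : E → E) : Prop :=
  0 < r ∧ r < 1 ∧ ∀ x y, ‖f x - f y‖ = r * ‖x - y‖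

/-- A self-conformal IFS. -/
def IsSelfConformalIFS {A : Type*} [Fintype A] (φ : A → E → E) : Prop :=
  2 ≤ Fintype.card A ∧
  (∀ a, ∃ r, IsContractionWith r (φ a)) ∧
  (∀ a, ContDiff ℝ 1 (φ a)) ∧
  (∀ a x, 0 < ‖fderiv ℝ (φ a) x‖ ∧ ∀ v, ‖fderiv ℝ (φ a) x v‖ = ‖fderiv ℝ (φ a) x‖ * ‖v‖) ∧
  (∃ H α₀ : ℝ, 0 < H ∧ 0 < α₀ ∧ ∀ a x y,
    |‖fderiv ℝ (φ a) x‖ - ‖fderiv ℝ (φ a) y‖| ≤ H * ‖x - y‖ ^ α₀) ∧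
  (∃ a₁ a₂ x₁ x₂, φ a₁ x₁ = x₁ ∧ φ a₂ x₂ = x₂ ∧ x₁ ≠ x₂)

/-- A self-similar IFS. -/
def IsSelfSimilarIFS {A : Type*} [Fintype A] (φ : A → E → E) : Prop :=
  2 ≤ Fintype.card A ∧
  (∀ a, ∃ r, IsSimilarityWith r (φ a)) ∧
  (∃ a₁ a₂ x₁ x₂, φ a₁ x₁ = x₁ ∧ φ a₂ x₂ = x₂ ∧ x₁ ≠ x₂)

/-- The IFS is affinely irreducible: no (nonempty) proper affine subspace is preserved. -/
def AffinelyIrreducible {A : Type*} (φ : A → E → E) : Prop :=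
  ¬ ∃ W : AffineSubspace ℝ E, (W : Set E).Nonempty ∧ W ≠ ⊤ ∧
      ∀ a, φ a '' (W : Set E) ⊆ (W : Set E)

/-- Closed `ε`-neighbourhood of an affine subspace. -/
def affNbhd (W : AffineSubspace ℝ E) (ε : ℝ) : Set E :=
  {y | Metric.infDist y (W : Set E) ≤ ε}

/-- topological support of a measure -/
def msupport [MeasurableSpace E] (μ : Measure E) : Set E :=
  {x | ∀ r : ℝ, 0 < r → 0 < μ (Metric.ball x r)}

/-- distance between two sets -/
def setDist (S T : Set E) : ℝ := sInf (Set.image2 dist S T)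

/-- map corresponding to a finite word (as a list) -/
def listMap {A : Type*} (φ : A → E → E) : List A → E → E
  | [] => id
  | a :: l => φ a ∘ listMap φ l

/-- map corresponding to the first `n` letters of an infinite word -/
def wordMap {A : Type*} (φ : A → E → E) : ℕ → (ℕ → A) → E → E
  | 0, _ => id
  | n + 1, a => φ (a 0) ∘ wordMap φ n (fun k => a (k + 1))

/-- set of `Ψ`-well-approximable vectors in `ℝ^d` -/
def WApprox (d : ℕ) (Ψ : ℕ → ℝ) : Set (EuclideanSpace ℝ (Fin d)) :=
  {x | {pq : (Fin d → ℤ) × ℕ | 0 < pq.2 ∧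
        ∀ i, |x i - (pq.1 i : ℝ) / (pq.2 : ℝ)| ≤ Ψ pq.2}.Infinite}

/-- set of singular vectors in `ℝ^d` -/
def Sing (d : ℕ) : Set (EuclideanSpace ℝ (Fin d)) :=
  {x | ∀ c : ℝ, 0 < c → ∃ T : ℝ, 0 < T ∧ ∀ t : ℝ, T ≤ t →
    ∃ q : ℕ, 0 < q ∧ (q : ℝ) < t ∧
      ∀ i, |(q : ℝ) * x i - round ((q : ℝ) * x i)| ≤ c * t ^ (-(1 : ℝ) / (d : ℝ))}
/-- The set of infinite words whose `n`-th letter lies in `Ab (b n)`. -/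
def cylSet {A : Type*} (Ab : A → Set A) (b : ℕ → A) : Set (ℕ → A) :=
  {a | ∀ n, a n ∈ Ab (b n)}

/-!
An entire conformal map of linear growth is injective. On a space of dimension `n ≥ 2` the
`n`-Laplacian is conformally invariant, so that comparing `log ‖f x‖` with `t * log ‖x‖` for `t ↓ 1`
shows that `f` covers the space at most once on average. Injectivity and lower bounds for the
derivative on a ball bound the distance between the images of separated points from below: by a
minimisation argument the image of a ball contains a ball whose radius is controlled by the
derivative.

With bounded distortion, the diameter of a cylinder is therefore comparable to the smallest local
expansion factor of the map of its word. This factor decays at least geometrically along the word,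
and by at most a fixed ratio per letter, so one can take for `N₁` the first time at which it falls
below a fixed multiple of `r`, and `N₂ = N₁ + k` with a fixed `k`.
-/

section ConformalLinearMap

variable {U V W : Type*} [NormedAddCommGroup U] [NormedSpace ℝ U]
  [NormedAddCommGroup V] [NormedSpace ℝ V] [NormedAddCommGroup W] [NormedSpace ℝ W]

theorem isConformalMap_of_norm_map {T : V →L[ℝ] W} (hT : 0 < ‖T‖)
    (h : ∀ v, ‖T v‖ = ‖T‖ * ‖v‖) : IsConformalMap T := by
  refine ⟨‖T‖, hT.ne', ⟨(‖T‖⁻¹ • T : V →L[ℝ] W), fun v => ?_⟩, ?_⟩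
  · simp [norm_smul, h, inv_mul_cancel_left₀ hT.ne']
  · ext v
    simp [smul_inv_smul₀ hT.ne']

theorem norm_apply_of_isConformalMap {T : V →L[ℝ] W} (hT : IsConformalMap T) (v : V) :
    ‖T v‖ = ‖T‖ * ‖v‖ := by
  rcases subsingleton_or_nontrivial V with _ | _
  · simp [Subsingleton.elim v 0]
  · obtain ⟨c, -, li, rfl⟩ := hT
    simp [norm_smul]

theorem norm_comp_of_isConformalMap {T : V →L[ℝ] W} (hT : IsConformalMap T) (S : U →L[ℝ] V) :
    ‖T.comp S‖ = ‖T‖ * ‖S‖ := by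
  rcases subsingleton_or_nontrivial V with _ | _
  · simp [Subsingleton.elim S 0]
  · obtain ⟨c, -, li, rfl⟩ := hT
    simp [norm_smul, ContinuousLinearMap.smul_comp,
      LinearIsometry.norm_toContinuousLinearMap_comp]

end ConformalLinearMap

section ConformalEndomorphism

open Module

variable {V : Type*} [NormedAddCommGroup V] [InnerProductSpace ℝ V] [FiniteDimensional ℝ V]
  {T : V →L[ℝ] V}

theorem isInvertible_of_isConformalMap (hT : IsConformalMap T) : T.IsInvertible :=
  ⟨(LinearEquiv.ofInjectiveEndo (T : V →ₗ[ℝ] V) hT.injective).toContinuousLinearEquiv, by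
    ext; simp⟩

theorem abs_det_of_isConformalMap (hT : IsConformalMap T) : |T.det| = ‖T‖ ^ finrank ℝ V := by
  rcases subsingleton_or_nontrivial V with _ | _
  · simp [ContinuousLinearMap.det, LinearMap.det_eq_one_of_subsingleton,
      finrank_zero_of_subsingleton]
  · obtain ⟨c, -, li, rfl⟩ := hT
    have hli : |LinearMap.det li.toLinearMap| = 1 := by
      rw [← LinearMap.normDet_eq_abs_det, li.normDet_eq_one]
    simp [ContinuousLinearMap.det, norm_smul, abs_mul, hli]

theorem adjoint_apply_of_isConformalMap (hT : IsConformalMap T) (v : V) :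
    T.adjoint (T v) = ‖T‖ ^ 2 • v := by
  rcases subsingleton_or_nontrivial V with _ | _
  · exact Subsingleton.elim _ _
  · obtain ⟨c, -, li, rfl⟩ := hT
    refine ext_inner_right ℝ fun w => ?_
    simp only [ContinuousLinearMap.adjoint_inner_left, smul_apply,
      LinearIsometry.coe_toContinuousLinearMap, inner_smul_left, inner_smul_right,
      LinearIsometry.inner_map_map, norm_smul, LinearIsometry.norm_toContinuousLinearMap,
      Real.norm_eq_abs, sq_abs, mul_one, conj_trivial]
    ring

theorem abs_det_smul_inverse_norm_pow_smul (hT : IsConformalMap T) {k : ℕ}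
    (hk : finrank ℝ V = k + 2) (a : V) :
    |T.det| • T.inverse (‖a‖ ^ k • a) = ‖T.adjoint a‖ ^ k • T.adjoint a := by
  obtain ⟨e, rfl⟩ := isInvertible_of_isConformalMap hT
  obtain ⟨v, rfl⟩ := e.surjective a
  have hadj := adjoint_apply_of_isConformalMap hT v
  have hnorm := norm_apply_of_isConformalMap hT v
  simp only [ContinuousLinearEquiv.coe_coe] at hadj hnorm
  rw [abs_det_of_isConformalMap hT, hk, hadj, hnorm, ContinuousLinearMap.inverse_equiv]
  simp only [map_smul, ContinuousLinearEquiv.coe_coe, ContinuousLinearEquiv.symm_apply_apply,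
    norm_smul, norm_pow, norm_norm, smul_smul]
  ring_nf

end ConformalEndomorphism

theorem inner_sub_norm_pow_smul_sub_nonneg {V : Type*} [NormedAddCommGroup V]
    [InnerProductSpace ℝ V] (k : ℕ) (a b : V) :
    0 ≤ inner ℝ (a - b) (‖a‖ ^ k • a - ‖b‖ ^ k • b) := by
  have hmono : 0 ≤ (‖a‖ - ‖b‖) * (‖a‖ ^ (k + 1) - ‖b‖ ^ (k + 1)) := by
    rcases le_total ‖a‖ ‖b‖ with h | h
    · exact mul_nonneg_of_nonpos_of_nonpos (by linarith)
        (sub_nonpos.2 (pow_le_pow_left₀ (norm_nonneg _) h _))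
    · exact mul_nonneg (by linarith) (sub_nonneg.2 (pow_le_pow_left₀ (norm_nonneg _) h _))
  have hcs : (‖a‖ ^ k + ‖b‖ ^ k) * inner ℝ a b ≤ (‖a‖ ^ k + ‖b‖ ^ k) * (‖a‖ * ‖b‖) := by
    gcongr
    exact real_inner_le_norm a b
  simp only [inner_sub_left, inner_sub_right, inner_smul_right, real_inner_self_eq_norm_sq,
    real_inner_comm a b]
  rw [pow_succ, pow_succ] at hmono
  linarith

section Localization

theorem tsupport_indicator_comp_symm_subset {V W : Type*} [TopologicalSpace V]
    [TopologicalSpace W] [T2Space W] (e : OpenPartialHomeomorph V W) {φ : V → ℝ}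
    (hcpt : HasCompactSupport φ) (hsupp : tsupport φ ⊆ e.source) :
    tsupport (e.target.indicator (φ ∘ e.symm)) ⊆ e '' tsupport φ := by
  refine closure_minimal (fun y hy => ?_)
    (hcpt.isCompact.image_of_continuousOn (e.continuousOn.mono hsupp)).isClosed
  obtain ⟨hyt, hne⟩ := Set.indicator_apply_ne_zero.1 hy
  exact ⟨e.symm y, subset_tsupport _ hne, e.right_inv hyt⟩

variable {V W : Type*} [NormedAddCommGroup V] [NormedSpace ℝ V] [NormedAddCommGroup W]
  [NormedSpace ℝ W]

theorem contDiff_indicator_comp_symm (e : OpenPartialHomeomorph V W)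
    (he : ContDiffOn ℝ 1 e.symm e.target) {φ : V → ℝ} (hφ : ContDiff ℝ 1 φ)
    (hcpt : HasCompactSupport φ) (hsupp : tsupport φ ⊆ e.source) :
    ContDiff ℝ 1 (e.target.indicator (φ ∘ e.symm)) := by
  refine contDiff_iff_contDiffAt.2 fun y => ?_
  by_cases hy : y ∉ tsupport (e.target.indicator (φ ∘ e.symm))
  · exact contDiffAt_const.congr_of_eventuallyEq (notMem_tsupport_iff_eventuallyEq.1 hy)
  obtain ⟨x, hx, rfl⟩ := tsupport_indicator_comp_symm_subset e hcpt hsupp (not_not.1 hy)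
  have hnhds := e.open_target.mem_nhds (e.map_source (hsupp hx))
  refine (hφ.contDiffAt.comp (e x) (he.contDiffAt hnhds)).congr_of_eventuallyEq ?_
  filter_upwards [hnhds] with z hz using Set.indicator_of_mem hz _

open scoped Manifold ContDiff in
theorem exists_finset_contDiff_sum_eq_one [FiniteDimensional ℝ V] {K : Set V}
    (hK : IsCompact K) {U : V → Set V}
    (hUo : ∀ x, IsOpen (U x)) (hUx : ∀ x, x ∈ U x) :
    ∃ (s : Finset V) (ρ : V → V → ℝ), (∀ i, ContDiff ℝ 1 (ρ i)) ∧
      (∀ i, tsupport (ρ i) ⊆ U i) ∧ ∀ x ∈ K, ∑ i ∈ s, ρ i x = 1 := by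
  obtain ⟨ρ, hρ⟩ := SmoothPartitionOfUnity.exists_isSubordinate 𝓘(ℝ, V)
    hK.isClosed U hUo (fun x _ => Set.mem_iUnion.2 ⟨x, hUx x⟩)
  have hfin := ρ.locallyFinite.finite_nonempty_inter_compact hK
  refine ⟨hfin.toFinset, fun i => ρ i, fun i => ?_, hρ, fun x hx => ?_⟩
  · exact (ρ i).contMDiff.contDiff.of_le (by exact_mod_cast le_top)
  · rw [← ρ.sum_eq_one hx, finsum_eq_sum_of_support_subset]
    exact fun i hi => hfin.mem_toFinset.2 ⟨x, hi, hx⟩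

end Localization

section Piola

variable {V : Type*} [NormedAddCommGroup V] [InnerProductSpace ℝ V]

/-- The divergence of a vector field on a finite-dimensional space. -/
def divergence (Y : V → V) (x : V) : ℝ :=
  LinearMap.trace ℝ V (fderiv ℝ Y x)

/-- The Piola transform of a vector field `Y` under `f`: the pull-back for which the flux of `Y`
through the image of a hypersurface equals the flux of `piola f Y` through the hypersurface. -/
def piola (f Y : V → V) (x : V) : V :=
  |(fderiv ℝ f x).det| • (fderiv ℝ f x).inverse (Y (f x))

theorem piola_id (Y : V → V) : piola id Y = Y := by
  ext x
  simp [piola, ContinuousLinearMap.det]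

/-- The integrand whose vanishing integral says, weakly, that the divergence of `piola f Y` is
`|det f'| • (divergence Y ∘ f)`, tested against `φ`. -/
def piolaDefect (f Y : V → V) (φ : V → ℝ) (x : V) : ℝ :=
  fderiv ℝ φ x (piola f Y x) + φ x * (|(fderiv ℝ f x).det| * divergence Y (f x))

theorem piolaDefect_eq_zero_of_notMem_tsupport {f Y : V → V} {φ : V → ℝ} {x : V}
    (hx : x ∉ tsupport φ) : piolaDefect f Y φ x = 0 := by
  have hder : fderiv ℝ φ x = 0 :=
    image_eq_zero_of_notMem_tsupport fun h => hx (tsupport_fderiv_subset ℝ h)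
  simp [piolaDefect, hder, image_eq_zero_of_notMem_tsupport hx]

theorem piolaDefect_finset_sum {ι : Type*} (s : Finset ι) (f Y : V → V) {φ : ι → V → ℝ}
    (hφ : ∀ i ∈ s, Differentiable ℝ (φ i)) (x : V) :
    piolaDefect f Y (fun z => ∑ i ∈ s, φ i z) x = ∑ i ∈ s, piolaDefect f Y (φ i) x := by
  simp [piolaDefect, fderiv_fun_sum fun i hi => hφ i hi x, Finset.sum_add_distrib, Finset.sum_mul]

variable [FiniteDimensional ℝ V]

theorem divergence_smul {φ : V → ℝ} {Y : V → V} {x : V} (hφ : DifferentiableAt ℝ φ x)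
    (hY : DifferentiableAt ℝ Y x) :
    divergence (fun z => φ z • Y z) x = fderiv ℝ φ x (Y x) + φ x * divergence Y x := by
  rw [divergence, fderiv_fun_smul hφ hY, ContinuousLinearMap.toLinearMap_add, map_add,
    ContinuousLinearMap.coe_smulRight, LinearMap.trace_smulRight, ContinuousLinearMap.coe_coe,
    ContinuousLinearMap.toLinearMap_smul, map_smul, smul_eq_mul, divergence,
    add_comm]

theorem continuous_divergence {Y : V → V} (hY : ContDiff ℝ 1 Y) : Continuous (divergence Y) := by
  have hlin : Continuous (LinearMap.trace ℝ V ∘ₗ ContinuousLinearMap.coeLM ℝ :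
      (V →L[ℝ] V) →ₗ[ℝ] ℝ) :=
    LinearMap.continuous_of_finiteDimensional _
  exact hlin.comp (hY.continuous_fderiv one_ne_zero)

theorem continuous_piola {f Y : V → V} (hf : ContDiff ℝ 1 f)
    (hinv : ∀ x, (fderiv ℝ f x).IsInvertible) (hY : Continuous Y) : Continuous (piola f Y) := by
  have hf' := hf.continuous_fderiv one_ne_zero
  refine (ContinuousLinearMap.continuous_det.comp hf').abs.smul
    (.clm_apply ?_ (hY.comp hf.continuous))
  exact continuous_iff_continuousAt.2 fun x =>
    ((hinv x).contDiffAt_map_inverse (n := 0)).continuousAt.comp hf'.continuousAt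

theorem piolaDefect_eq_abs_det_mul_divergence_smul {f Y : V → V} {φ χ : V → ℝ} {x : V}
    (hf : DifferentiableAt ℝ f x) (hinv : (fderiv ℝ f x).IsInvertible)
    (hY : DifferentiableAt ℝ Y (f x)) (hχ : DifferentiableAt ℝ χ (f x))
    (hφ : φ =ᶠ[𝓝 x] χ ∘ f) :
    piolaDefect f Y φ x = |(fderiv ℝ f x).det| * divergence (fun z => χ z • Y z) (f x) := by
  rw [piolaDefect, hφ.fderiv_eq, hφ.eq_of_nhds, fderiv_comp x hχ hf, divergence_smul hχ hY, piola,
    ContinuousLinearMap.comp_apply, map_smul, hinv.self_apply_inverse, map_smul]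
  simp only [Function.comp_apply, smul_eq_mul]
  ring

variable [MeasurableSpace V] [BorelSpace V]

theorem integral_divergence_eq_zero {Y : V → V} (hY : ContDiff ℝ 1 Y)
    (hcpt : HasCompactSupport Y) : ∫ x, divergence Y x = 0 := by
  let b := stdOrthonormalBasis ℝ V
  have hint : ∀ i, Integrable fun x => inner ℝ (b i) (fderiv ℝ Y x (b i)) := fun i =>
    Continuous.integrable_of_hasCompactSupport
      (by have := hY.continuous_fderiv one_ne_zero; fun_prop)
      ((hcpt.fderiv (𝕜 := ℝ)).comp_left (g := fun T : V →L[ℝ] V => inner ℝ (b i) (T (b i)))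
        (by simp))
  have hint' : ∀ i, Integrable fun x => inner ℝ (b i) (Y x) := fun i =>
    Continuous.integrable_of_hasCompactSupport (by have := hY.continuous; fun_prop)
      (hcpt.comp_left (g := fun v : V => inner ℝ (b i) v) (by simp))
  simp_rw [divergence, LinearMap.trace_eq_sum_inner _ b]
  simp only [ContinuousLinearMap.coe_coe]
  rw [integral_finsetSum _ fun i _ => hint i]
  refine Finset.sum_eq_zero fun i _ => ?_
  refine (integral_bilinear_fderiv_right_eq_neg_left_of_integrable (μ := (volume : Measure V))
    (f := fun _ : V => b i) (g := Y) (v := b i) (B := innerSL ℝ) (by simp) (hint i) (hint' i)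
    (fun _ _ => differentiableAt_const _)
    (fun x _ => hY.differentiable one_ne_zero x)).trans ?_
  simp

theorem integrable_piolaDefect {f Y : V → V} (hf : ContDiff ℝ 1 f)
    (hinv : ∀ x, (fderiv ℝ f x).IsInvertible) (hY : ContDiff ℝ 1 Y) {φ : V → ℝ}
    (hφ : ContDiff ℝ 1 φ) (hcpt : HasCompactSupport φ) : Integrable (piolaDefect f Y φ) := by
  refine Continuous.integrable_of_hasCompactSupport ?_
    (.intro hcpt fun x hx => piolaDefect_eq_zero_of_notMem_tsupport hx)
  refine ((hφ.continuous_fderiv one_ne_zero).clm_apply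
    (continuous_piola hf hinv hY.continuous)).add (hφ.continuous.mul (.mul ?_ ?_))
  · exact (ContinuousLinearMap.continuous_det.comp (hf.continuous_fderiv one_ne_zero)).abs
  · exact (continuous_divergence hY).comp hf.continuous

theorem exists_isOpen_integral_piolaDefect_eq_zero {f : V → V} (hf : ContDiff ℝ 1 f)
    (hinv : ∀ x, (fderiv ℝ f x).IsInvertible) (x₀ : V) :
    ∃ U : Set V, IsOpen U ∧ x₀ ∈ U ∧ ∀ (Y : V → V) (φ : V → ℝ), ContDiff ℝ 1 Y →
      ContDiff ℝ 1 φ → HasCompactSupport φ → tsupport φ ⊆ U → ∫ x, piolaDefect f Y φ x = 0 := by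
  have hder : ∀ x, ∃ T : V ≃L[ℝ] V, HasFDerivAt f (T : V →L[ℝ] V) x := fun x => by
    obtain ⟨T, hT⟩ := hinv x
    exact ⟨T, hT ▸ (hf.differentiable one_ne_zero x).hasFDerivAt⟩
  obtain ⟨T₀, hT₀⟩ := hder x₀
  let e := hf.contDiffAt.toOpenPartialHomeomorph f hT₀ one_ne_zero
  have hsymm : ContDiffOn ℝ 1 e.symm e.target := fun y hy => by
    obtain ⟨T, hT⟩ := hder (e.symm y)
    exact (e.contDiffAt_symm hy hT hf.contDiffAt).contDiffWithinAt
  refine ⟨e.source, e.open_source, hf.contDiffAt.mem_toOpenPartialHomeomorph_source hT₀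
    one_ne_zero, fun Y φ hY hφ hcpt hsupp => ?_⟩
  set χ := e.target.indicator (φ ∘ e.symm)
  have hχ : ContDiff ℝ 1 χ := contDiff_indicator_comp_symm e hsymm hφ hcpt hsupp
  have hχsupp : tsupport χ ⊆ e '' tsupport φ := tsupport_indicator_comp_symm_subset e hcpt hsupp
  have hχtarget : tsupport χ ⊆ e.target :=
    hχsupp.trans ((Set.image_mono hsupp).trans e.image_source_eq_target.subset)
  have hχcpt : HasCompactSupport χ :=
    (hcpt.isCompact.image_of_continuousOn (e.continuousOn.mono hsupp)).of_isClosed_subset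
      (isClosed_tsupport χ) hχsupp
  calc ∫ x, piolaDefect f Y φ x
      = ∫ x in e.source, piolaDefect f Y φ x :=
        (setIntegral_eq_integral_of_forall_compl_eq_zero fun x hx =>
          piolaDefect_eq_zero_of_notMem_tsupport fun h => hx (hsupp h)).symm
    _ = ∫ x in e.source, |(fderiv ℝ f x).det| • divergence (fun z => χ z • Y z) (e x) := by
        refine setIntegral_congr_fun e.open_source.measurableSet fun x hx => ?_
        refine piolaDefect_eq_abs_det_mul_divergence_smul (hf.differentiable one_ne_zero x)
          (hinv x) (hY.differentiable one_ne_zero _) (hχ.differentiable one_ne_zero _) ?_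
        filter_upwards [e.open_source.mem_nhds hx] with z hz
        exact (congrArg φ (e.left_inv hz)).symm.trans
          (Set.indicator_of_mem (e.map_source hz) (φ ∘ e.symm)).symm
    _ = ∫ y in e.target, divergence (fun z => χ z • Y z) y :=
        (integral_target_eq_integral_abs_det_fderiv_smul volume (f := e) (f' := fderiv ℝ f)
          (fun x _ => (hf.differentiable one_ne_zero x).hasFDerivAt) _).symm
    _ = ∫ y, divergence (fun z => χ z • Y z) y := by
        refine setIntegral_eq_integral_of_forall_compl_eq_zero fun y hy => ?_
        rw [divergence, image_eq_zero_of_notMem_tsupport fun h => hy (hχtarget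
          (tsupport_smul_subset_left χ Y (tsupport_fderiv_subset ℝ h)))]
        simp
    _ = 0 := integral_divergence_eq_zero (hχ.smul hY) hχcpt.smul_right

theorem integral_piolaDefect_eq_zero {f Y : V → V} (hf : ContDiff ℝ 1 f)
    (hinv : ∀ x, (fderiv ℝ f x).IsInvertible) (hY : ContDiff ℝ 1 Y) {φ : V → ℝ}
    (hφ : ContDiff ℝ 1 φ) (hcpt : HasCompactSupport φ) : ∫ x, piolaDefect f Y φ x = 0 := by
  choose U hUo hUx hU using exists_isOpen_integral_piolaDefect_eq_zero hf hinv
  obtain ⟨s, ρ, hρ, hρU, hsum⟩ := exists_finset_contDiff_sum_eq_one hcpt.isCompact hUo hUx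
  have hdecomp : φ = fun x => ∑ i ∈ s, ρ i x * φ x := by
    ext x
    by_cases hx : x ∈ tsupport φ
    · rw [← Finset.sum_mul, hsum x hx, one_mul]
    · simp [image_eq_zero_of_notMem_tsupport hx]
  have hC : ∀ i, ContDiff ℝ 1 fun x => ρ i x * φ x := fun i => (hρ i).mul hφ
  have hcpt' : ∀ i, HasCompactSupport fun x => ρ i x * φ x := fun i => hcpt.mul_left
  rw [hdecomp]
  simp_rw [piolaDefect_finset_sum s f Y fun i _ => (hC i).differentiable one_ne_zero]
  rw [integral_finsetSum _ fun i _ => integrable_piolaDefect hf hinv hY (hC i) (hcpt' i)]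
  exact Finset.sum_eq_zero fun i _ => hU i Y _ hY (hC i) (hcpt' i)
    ((tsupport_mul_subset_left).trans (hρU i))

end Piola

section LogPotential

variable {V : Type*} [NormedAddCommGroup V]

/-- A smooth substitute for `log ‖x‖` without singularity at the origin. The fourth power makes
the field `logFlux` continuously differentiable in every dimension. -/
def logPotential (x : V) : ℝ :=
  Real.log (1 + ‖x‖ ^ 4) / 4

/-- The `n`-Laplacian of `logPotential` in dimension `n = k + 2`. -/
def logDensity (k : ℕ) (x : V) : ℝ :=
  4 * (k + 1) * ‖x‖ ^ (3 * k + 2) / (1 + ‖x‖ ^ 4) ^ (k + 2)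

theorem logDensity_nonneg (k : ℕ) (x : V) : 0 ≤ logDensity k x := by
  unfold logDensity
  positivity

theorem continuous_logDensity (k : ℕ) : Continuous (logDensity k : V → ℝ) := by
  unfold logDensity
  exact .div (by fun_prop) (by fun_prop) fun x => by positivity

theorem one_add_norm_pow_four_le (x : V) : (1 + ‖x‖) ^ 4 ≤ 8 * (1 + ‖x‖ ^ 4) := by
  nlinarith [sq_nonneg (‖x‖ - 1), sq_nonneg (‖x‖ ^ 2 - 1), sq_nonneg (‖x‖ ^ 2 - ‖x‖)]

theorem logDensity_le (k : ℕ) (x : V) :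
    logDensity k x ≤ 4 * (k + 1) * 8 ^ (k + 2) * (1 + ‖x‖) ^ (-(k + 3 : ℝ)) := by
  have hpow : ‖x‖ ^ (3 * k + 2) * (1 + ‖x‖) ^ (k + 3) ≤ 8 ^ (k + 2) * (1 + ‖x‖ ^ 4) ^ (k + 2) :=
    calc ‖x‖ ^ (3 * k + 2) * (1 + ‖x‖) ^ (k + 3)
        ≤ (1 + ‖x‖) ^ (3 * k + 5) * (1 + ‖x‖) ^ (k + 3) := by
          gcongr
          exact (pow_le_pow_left₀ (norm_nonneg x) (by linarith) _).trans
            (pow_le_pow_right₀ (by linarith [norm_nonneg x]) (by omega))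
      _ = ((1 + ‖x‖) ^ 4) ^ (k + 2) := by rw [← pow_add, ← pow_mul]; congr 1; ring
      _ ≤ (8 * (1 + ‖x‖ ^ 4)) ^ (k + 2) := by gcongr; exact one_add_norm_pow_four_le x
      _ = _ := mul_pow _ _ _
  have hexp : (1 + ‖x‖) ^ (-(k + 3 : ℝ)) = ((1 + ‖x‖) ^ (k + 3))⁻¹ := by
    rw [Real.rpow_neg (by positivity), ← Real.rpow_natCast]
    push_cast
    rfl
  rw [logDensity, hexp, ← div_eq_mul_inv, div_le_div_iff₀ (by positivity) (by positivity)]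
  calc _ = 4 * (k + 1 : ℝ) * (‖x‖ ^ (3 * k + 2) * (1 + ‖x‖) ^ (k + 3)) := by ring
    _ ≤ 4 * (k + 1 : ℝ) * (8 ^ (k + 2) * (1 + ‖x‖ ^ 4) ^ (k + 2)) := by gcongr
    _ = _ := by ring

theorem logPotential_le_add {C : ℝ} {x y : V} (h : ‖y‖ ≤ C * (1 + ‖x‖)) :
    logPotential y ≤ logPotential x + Real.log (1 + 8 * C ^ 4) / 4 := by
  have hle : 1 + ‖y‖ ^ 4 ≤ (1 + ‖x‖ ^ 4) * (1 + 8 * C ^ 4) :=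
    calc 1 + ‖y‖ ^ 4 ≤ 1 + (C * (1 + ‖x‖)) ^ 4 := by gcongr
      _ = 1 + C ^ 4 * (1 + ‖x‖) ^ 4 := by rw [mul_pow]
      _ ≤ 1 + C ^ 4 * (8 * (1 + ‖x‖ ^ 4)) := by gcongr; exact one_add_norm_pow_four_le x
      _ ≤ (1 + ‖x‖ ^ 4) * (1 + 8 * C ^ 4) := by nlinarith [pow_nonneg (norm_nonneg x) 4]
  have hlog := Real.log_le_log (by positivity) hle
  rw [Real.log_mul (by positivity) (by positivity)] at hlog
  unfold logPotential
  linarith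

theorem tendsto_logPotential_cobounded_atTop :
    Tendsto (logPotential : V → ℝ) (Bornology.cobounded V) atTop :=
  (Real.tendsto_log_atTop.comp (tendsto_atTop_add_const_left _ 1
    ((tendsto_pow_atTop (by norm_num)).comp tendsto_norm_cobounded_atTop))).atTop_div_const
      (by norm_num)

variable [InnerProductSpace ℝ V]

/-- The gradient of `logPotential`. -/
def logGradient (x : V) : V :=
  (‖x‖ ^ 2 / (1 + ‖x‖ ^ 4)) • x

/-- The field `‖∇g‖ ^ (n - 2) • ∇g` with `g = logPotential`, in dimension `n = k + 2`. -/
def logFlux (k : ℕ) (x : V) : V :=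
  ‖logGradient x‖ ^ k • logGradient x

theorem hasFDerivAt_norm_pow_add_two (m : ℕ) (x : V) :
    HasFDerivAt (fun z : V => ‖z‖ ^ (m + 2)) (((m + 2 : ℕ) * ‖x‖ ^ m) • innerSL ℝ x) x := by
  have h := hasFDerivAt_norm_rpow x (p := (m + 2 : ℕ)) (by norm_cast; omega)
  have hexp : ((m + 2 : ℕ) : ℝ) - 2 = m := by push_cast; ring
  simpa only [Real.rpow_natCast, hexp] using h

theorem contDiff_norm_pow_add_two (m : ℕ) : ContDiff ℝ 1 fun z : V => ‖z‖ ^ (m + 2) := by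
  simpa only [Real.rpow_natCast] using
    contDiff_norm_rpow (E := V) (p := (m + 2 : ℕ)) (by norm_cast; omega)

theorem hasFDerivAt_logPotential (x : V) :
    HasFDerivAt logPotential (innerSL ℝ (logGradient x)) x := by
  have h := (((hasFDerivAt_norm_pow_add_two 2 x).const_add 1).log
    (by positivity : 1 + ‖x‖ ^ 4 ≠ 0)).const_smul (4⁻¹ : ℝ)
  convert! h using 1
  · ext z
    simp [logPotential, div_eq_inv_mul]
  · rw [logGradient, map_smul, smul_smul, smul_smul]
    congr 1
    push_cast
    ring

theorem contDiff_logPotential : ContDiff ℝ 1 (logPotential : V → ℝ) :=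
  ((contDiff_const.add (contDiff_norm_pow_add_two 2)).log fun x => by positivity).div_const 4

theorem logFlux_eq (k : ℕ) (x : V) :
    logFlux k x = (‖x‖ ^ (3 * k + 2) / (1 + ‖x‖ ^ 4) ^ (k + 1)) • x := by
  rw [logFlux, logGradient, norm_smul, Real.norm_of_nonneg (by positivity), smul_smul]
  congr 1
  simp only [div_pow, mul_pow]
  field_simp
  ring

theorem contDiff_logFlux (k : ℕ) : ContDiff ℝ 1 (logFlux k : V → V) := by
  have hden : ContDiff ℝ 1 fun x : V => (1 + ‖x‖ ^ 4) ^ (k + 1) :=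
    (contDiff_const.add (contDiff_norm_pow_add_two 2)).pow _
  rw [funext (logFlux_eq k)]
  exact ((contDiff_norm_pow_add_two _).div hden fun x => by positivity).smul contDiff_id

variable [FiniteDimensional ℝ V] {k : ℕ}

theorem divergence_logFlux (hk : Module.finrank ℝ V = k + 2) :
    divergence (logFlux k : V → V) = logDensity k := by
  ext x
  have hne : 1 + ‖x‖ ^ 4 ≠ 0 := by positivity
  have hcoeff : HasFDerivAt (fun z : V => ‖z‖ ^ (3 * k + 2) / (1 + ‖z‖ ^ 4) ^ (k + 1))
      (((3 * k + 2) * ‖x‖ ^ (3 * k) / (1 + ‖x‖ ^ 4) ^ (k + 1) -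
        4 * (k + 1) * ‖x‖ ^ (3 * k + 4) / (1 + ‖x‖ ^ 4) ^ (k + 2)) • innerSL ℝ x) x := by
    convert! (hasFDerivAt_norm_pow_add_two (3 * k) x).mul
      ((hasDerivAt_inv (pow_ne_zero (k + 1) hne)).comp_hasFDerivAt x
        (((hasFDerivAt_norm_pow_add_two 2 x).const_add 1).pow (k + 1))) using 1
    simp only [smul_smul, ← add_smul, nsmul_eq_mul, Function.comp_apply]
    congr 1
    push_cast
    field_simp
    ring
  have hid : divergence (fun z : V => z) x = k + 2 := by
    simp [divergence, hk]
  rw [funext (logFlux_eq k), divergence_smul hcoeff.differentiableAt differentiableAt_fun_id,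
    hcoeff.fderiv, hid, logDensity]
  simp only [smul_apply, innerSL_apply_apply, real_inner_self_eq_norm_sq, smul_eq_mul]
  field_simp
  ring

variable [MeasurableSpace V] [BorelSpace V]

theorem integrable_logDensity (hk : Module.finrank ℝ V = k + 2) :
    Integrable (logDensity k : V → ℝ) := by
  refine ((integrable_one_add_norm (r := k + 3) (by rw [hk]; push_cast; linarith)).const_mul
    (4 * (k + 1) * 8 ^ (k + 2))).mono' (continuous_logDensity k).aestronglyMeasurable
    (.of_forall fun x => ?_)
  rw [Real.norm_of_nonneg (logDensity_nonneg k x)]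
  exact logDensity_le k x

theorem integral_logDensity_pos (hk : Module.finrank ℝ V = k + 2) :
    0 < ∫ x : V, logDensity k x := by
  have : Nontrivial V := Module.nontrivial_of_finrank_pos (R := ℝ) (by omega)
  obtain ⟨v, hv⟩ := exists_ne (0 : V)
  refine integral_pos_of_integrable_nonneg_nonzero (x := v) (continuous_logDensity k)
    (integrable_logDensity hk) (logDensity_nonneg k) ?_
  have := norm_pos_iff.2 hv
  unfold logDensity
  positivity

end LogPotential

section MassBound

variable {V : Type*} [NormedAddCommGroup V] [InnerProductSpace ℝ V] [FiniteDimensional ℝ V]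

theorem isInvertible_fderiv_of_conformal {f : V → V} (hf : Conformal f) (x : V) :
    (fderiv ℝ f x).IsInvertible :=
  isInvertible_of_isConformalMap (conformalAt_iff_isConformalMap_fderiv.1 (hf x))

theorem piola_logFlux {f : V → V} {x : V} (hf : ConformalAt f x) {k : ℕ}
    (hk : Module.finrank ℝ V = k + 2) :
    piola f (logFlux k) x = ‖(fderiv ℝ f x).adjoint (logGradient (f x))‖ ^ k •
      (fderiv ℝ f x).adjoint (logGradient (f x)) :=
  abs_det_smul_inverse_norm_pow_smul (conformalAt_iff_isConformalMap_fderiv.1 hf) hk _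

theorem fderiv_comp_logPotential_sub {f : V → V} {x : V} (hf : DifferentiableAt ℝ f x) {ψ : ℝ → ℝ}
    (hψ : Differentiable ℝ ψ) (t : ℝ) (w : V) :
    fderiv ℝ (fun z => ψ (logPotential (f z) - t * logPotential z)) x w =
      deriv ψ (logPotential (f x) - t * logPotential x) *
        inner ℝ ((fderiv ℝ f x).adjoint (logGradient (f x)) - t • logGradient x) w := by
  have hlog : HasFDerivAt (fun z => logPotential (f z) - t * logPotential z) _ x :=
    ((hasFDerivAt_logPotential (f x)).comp x hf.hasFDerivAt).sub
      ((hasFDerivAt_logPotential x).const_mul t)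
  have h : HasFDerivAt (fun z => ψ (logPotential (f z) - t * logPotential z)) _ x :=
    (hψ _).hasDerivAt.comp_hasFDerivAt x hlog
  rw [h.fderiv]
  simp [inner_sub_left, ContinuousLinearMap.adjoint_inner_left, inner_smul_left]

/-- The monotonicity of `a ↦ ‖a‖ ^ k • a` makes the divergence-free parts comparable. -/
theorem mul_logDensity_comp_sub_le_piolaDefect_sub {f : V → V} {k : ℕ} (hf : Conformal f)
    (hk : Module.finrank ℝ V = k + 2) {ψ : ℝ → ℝ} (hψ : Differentiable ℝ ψ) (hmono : Monotone ψ)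
    {t : ℝ} (ht : 0 ≤ t) {φ : V → ℝ}
    (hφ : φ = fun x => ψ (logPotential (f x) - t * logPotential x)) (x : V) :
    φ x * (|(fderiv ℝ f x).det| * logDensity k (f x)) - t ^ (k + 1) * (φ x * logDensity k x) ≤
      piolaDefect f (logFlux k) φ x - t ^ (k + 1) * piolaDefect id (logFlux k) φ x := by
  have hdφ := fderiv_comp_logPotential_sub (hf.differentiable x) hψ t
  set a := (fderiv ℝ f x).adjoint (logGradient (f x)) with ha
  set b := logGradient x
  have hnonneg := mul_nonneg (hmono.deriv_nonneg (x := logPotential (f x) - t * logPotential x))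
    (inner_sub_norm_pow_smul_sub_nonneg k a (t • b))
  have hscale : ‖t • b‖ ^ k • t • b = t ^ (k + 1) • logFlux k x := by
    rw [logFlux, norm_smul, Real.norm_of_nonneg ht, mul_pow, smul_smul, smul_smul]
    congr 1
    ring
  simp only [hscale, inner_sub_right, inner_smul_right] at hnonneg
  have hdet : |(fderiv ℝ (id : V → V) x).det| = 1 := by simp [ContinuousLinearMap.det]
  rw [piolaDefect, piolaDefect, piola_id, hdet, id, divergence_logFlux hk, piola_logFlux (hf x) hk,
    hφ, hdφ, hdφ, ← ha, inner_smul_right]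
  linarith

/-- For `t > 1` and a map of linear growth, `logPotential ∘ f - t * logPotential` tends to `-∞`. -/
theorem hasCompactSupport_comp_logPotential_sub {f : V → V} {C : ℝ}
    (hC : ∀ x, ‖f x‖ ≤ C * (1 + ‖x‖)) {ψ : ℝ → ℝ} {s : ℝ} (hψ : ∀ u ≤ s, ψ u = 0) {t : ℝ}
    (ht : 1 < t) :
    HasCompactSupport fun x => ψ (logPotential (f x) - t * logPotential x) := by
  rw [hasCompactSupport_iff_eventuallyEq, coclosedCompact_eq_cocompact, ← cobounded_eq_cocompact]
  have hlarge := (tendsto_logPotential_cobounded_atTop (V := V)).eventually_ge_atTop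
    ((Real.log (1 + 8 * C ^ 4) / 4 - s) / (t - 1))
  filter_upwards [hlarge] with x hx
  rw [div_le_iff₀ (sub_pos.2 ht)] at hx
  exact hψ _ (by linarith [logPotential_le_add (hC x)])

variable [MeasurableSpace V] [BorelSpace V] {f : V → V} {k : ℕ}

/-- Comparison principle for the weak `n`-Laplacians of `logPotential ∘ f` and
`t * logPotential`. -/
theorem integral_mul_logDensity_comp_le (hf : Conformal f) (hf₁ : ContDiff ℝ 1 f)
    (hk : Module.finrank ℝ V = k + 2) {ψ : ℝ → ℝ} (hψ : ContDiff ℝ 1 ψ) (hmono : Monotone ψ)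
    {t : ℝ} (ht : 0 ≤ t) {φ : V → ℝ}
    (hφ : φ = fun x => ψ (logPotential (f x) - t * logPotential x)) (hcpt : HasCompactSupport φ) :
    ∫ x, φ x * (|(fderiv ℝ f x).det| * logDensity k (f x)) ≤
      t ^ (k + 1) * ∫ x, φ x * logDensity k x := by
  have hφ₁ : ContDiff ℝ 1 φ := hφ ▸ hψ.comp
    ((contDiff_logPotential.comp hf₁).sub (contDiff_const.mul contDiff_logPotential))
  have hinv := isInvertible_fderiv_of_conformal hf
  have hinv_id := isInvertible_fderiv_of_conformal (conformal_id (X := V))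
  have hflux := contDiff_logFlux (V := V) k
  have hdet := hf₁.continuous_fderiv one_ne_zero
  have hcont := continuous_logDensity (V := V) k
  have hint_f : Integrable fun x => φ x * (|(fderiv ℝ f x).det| * logDensity k (f x)) :=
    (hφ₁.continuous.mul ((ContinuousLinearMap.continuous_det.comp hdet).abs.mul
      (hcont.comp hf₁.continuous))).integrable_of_hasCompactSupport hcpt.mul_right
  have hint_id : Integrable fun x => φ x * logDensity k x :=
    (hφ₁.continuous.mul hcont).integrable_of_hasCompactSupport hcpt.mul_right
  rw [← sub_nonpos, ← integral_const_mul, ← integral_sub hint_f (hint_id.const_mul _)]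
  calc _ ≤ ∫ x, (piolaDefect f (logFlux k) φ x - t ^ (k + 1) * piolaDefect id (logFlux k) φ x) :=
        integral_mono (hint_f.sub (hint_id.const_mul _))
          ((integrable_piolaDefect hf₁ hinv hflux hφ₁ hcpt).sub
            ((integrable_piolaDefect contDiff_id hinv_id hflux hφ₁ hcpt).const_mul _))
          (mul_logDensity_comp_sub_le_piolaDefect_sub hf hk (hψ.differentiable one_ne_zero)
            hmono ht hφ)
    _ = 0 := by
        rw [integral_sub (integrable_piolaDefect hf₁ hinv hflux hφ₁ hcpt)
          ((integrable_piolaDefect contDiff_id hinv_id hflux hφ₁ hcpt).const_mul _),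
          integral_const_mul, integral_piolaDefect_eq_zero hf₁ hinv hflux hφ₁ hcpt,
          integral_piolaDefect_eq_zero contDiff_id hinv_id hflux hφ₁ hcpt]
        simp

theorem setIntegral_abs_det_mul_logDensity_comp_le_pow_mul (hf : Conformal f)
    (hf₁ : ContDiff ℝ 1 f) (hk : Module.finrank ℝ V = k + 2) {C : ℝ}
    (hC : ∀ x, ‖f x‖ ≤ C * (1 + ‖x‖)) {K : Set V} (hK : IsCompact K) {t : ℝ} (ht : 1 < t) :
    ∫ x in K, |(fderiv ℝ f x).det| * logDensity k (f x) ≤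
      t ^ (k + 1) * ∫ x : V, logDensity k x := by
  have hdiff : Continuous fun x => logPotential (f x) - t * logPotential x :=
    (contDiff_logPotential.continuous.comp hf₁.continuous).sub
      (continuous_const.mul contDiff_logPotential.continuous)
  obtain ⟨m, hm⟩ := hK.bddBelow_image hdiff.continuousOn
  have hψ : ContDiff ℝ 1 fun u => Real.smoothTransition (u - m + 1) :=
    Real.smoothTransition.contDiff.comp ((contDiff_id.sub contDiff_const).add contDiff_const)
  have hcpt := hasCompactSupport_comp_logPotential_sub hC (s := m - 1)
    (fun u hu => Real.smoothTransition.zero_of_nonpos (by linarith : u - m + 1 ≤ 0)) ht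
  obtain ⟨φ, hφ⟩ : ∃ φ : V → ℝ, φ = fun x =>
    Real.smoothTransition (logPotential (f x) - t * logPotential x - m + 1) := ⟨_, rfl⟩
  have hφ_cont : Continuous φ := hφ ▸ hψ.continuous.comp hdiff
  have hφ_one : ∀ x ∈ K, φ x = 1 := fun x hx => by
    rw [hφ]
    exact Real.smoothTransition.one_of_one_le (by linarith [hm (Set.mem_image_of_mem _ hx)])
  have hφ_nonneg : ∀ x, 0 ≤ φ x := fun x => hφ ▸ Real.smoothTransition.nonneg _
  have hφ_le_one : ∀ x, φ x ≤ 1 := fun x => hφ ▸ Real.smoothTransition.le_one _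
  rw [← hφ] at hcpt
  have hdensity : Continuous fun x => |(fderiv ℝ f x).det| * logDensity k (f x) :=
    (ContinuousLinearMap.continuous_det.comp (hf₁.continuous_fderiv one_ne_zero)).abs.mul
      ((continuous_logDensity k).comp hf₁.continuous)
  calc _ = ∫ x in K, φ x * (|(fderiv ℝ f x).det| * logDensity k (f x)) :=
        setIntegral_congr_fun hK.measurableSet fun x hx => by simp only [hφ_one x hx, one_mul]
    _ ≤ ∫ x, φ x * (|(fderiv ℝ f x).det| * logDensity k (f x)) :=
        setIntegral_le_integral
          ((hφ_cont.mul hdensity).integrable_of_hasCompactSupport hcpt.mul_right)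
          (.of_forall fun x => mul_nonneg (hφ_nonneg x)
            (mul_nonneg (abs_nonneg _) (logDensity_nonneg _ _)))
    _ ≤ t ^ (k + 1) * ∫ x, φ x * logDensity k x :=
        integral_mul_logDensity_comp_le hf hf₁ hk hψ
          (fun u v huv => Real.smoothTransition.monotone (by linarith)) (by linarith) hφ hcpt
    _ ≤ t ^ (k + 1) * ∫ x, logDensity k x := by
        refine mul_le_mul_of_nonneg_left (integral_mono ?_ (integrable_logDensity hk)
          fun x => mul_le_of_le_one_left (logDensity_nonneg k x) (hφ_le_one x)) (by positivity)
        exact (hφ_cont.mul (continuous_logDensity k)).integrable_of_hasCompactSupport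
          hcpt.mul_right

/-- A conformal map of linear growth covers the space at most once on average. -/
theorem setIntegral_abs_det_mul_logDensity_comp_le (hf : Conformal f) (hf₁ : ContDiff ℝ 1 f)
    (hk : Module.finrank ℝ V = k + 2) {C : ℝ} (hC : ∀ x, ‖f x‖ ≤ C * (1 + ‖x‖)) {K : Set V}
    (hK : IsCompact K) :
    ∫ x in K, |(fderiv ℝ f x).det| * logDensity k (f x) ≤ ∫ x : V, logDensity k x := by
  have hlim : Tendsto (fun t : ℝ => t ^ (k + 1) * ∫ x : V, logDensity k x) (𝓝[>] 1)
      (𝓝 (∫ x : V, logDensity k x)) := by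
    have h : Continuous fun t : ℝ => t ^ (k + 1) * ∫ x : V, logDensity k x := by fun_prop
    simpa using (h.tendsto 1).mono_left nhdsWithin_le_nhds
  exact ge_of_tendsto hlim (eventually_mem_nhdsWithin.mono fun t ht =>
    setIntegral_abs_det_mul_logDensity_comp_le_pow_mul hf hf₁ hk hC hK ht)

end MassBound

section Injectivity

variable {V : Type*} [NormedAddCommGroup V] [InnerProductSpace ℝ V] [FiniteDimensional ℝ V]

theorem injective_of_conformal_of_finrank_le_one {f : V → V} (hf : Conformal f)
    (hdim : Module.finrank ℝ V ≤ 1) : Function.Injective f := by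
  intro p q hpq
  by_contra hne
  have hline : ∀ τ : ℝ, HasDerivAt (fun τ : ℝ => p + τ • (q - p)) (q - p) τ := fun τ => by
    simpa using ((hasDerivAt_id τ).smul_const (q - p)).const_add p
  have hderiv : ∀ τ : ℝ, HasDerivAt (fun τ : ℝ => inner ℝ (f (p + τ • (q - p))) (q - p))
      (inner ℝ (fderiv ℝ f (p + τ • (q - p)) (q - p)) (q - p)) τ := fun τ => by
    simpa using ((hf.differentiable _).hasFDerivAt.comp_hasDerivAt τ (hline τ)).inner ℝ
      (hasDerivAt_const τ (q - p))
  obtain ⟨τ, -, hτ⟩ := exists_hasDerivAt_eq_zero zero_lt_one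
    (fun τ _ => (hderiv τ).continuousAt.continuousWithinAt) (by simp [hpq]) fun τ _ => hderiv τ
  have hpos : 0 < Module.finrank ℝ V :=
    have := nontrivial_of_ne p q hne
    Module.finrank_pos
  have hv := sub_ne_zero.2 (Ne.symm hne)
  obtain ⟨c, hc⟩ := exists_smul_eq_of_finrank_eq_one (le_antisymm hdim hpos) hv
    (fderiv ℝ f (p + τ • (q - p)) (q - p))
  rw [← hc, real_inner_smul_left, mul_eq_zero, inner_self_eq_zero, or_iff_left hv] at hτ
  rw [hτ, zero_smul] at hc
  exact hv ((conformalAt_iff_isConformalMap_fderiv.1 (hf _)).injective (hc.symm.trans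
    (map_zero _).symm))

theorem exists_isCompact_injOn_image_mem_nhds {f : V → V} (hf : ContDiff ℝ 1 f) {p : V}
    (hinv : (fderiv ℝ f p).IsInvertible) {U : Set V} (hU : U ∈ 𝓝 p) :
    ∃ K ⊆ U, IsCompact K ∧ Set.InjOn f K ∧ f '' K ∈ 𝓝 (f p) := by
  obtain ⟨e, he⟩ := hinv
  have hstrict : HasStrictFDerivAt f (e : V →L[ℝ] V) p :=
    he ▸ hf.contDiffAt.hasStrictFDerivAt one_ne_zero
  set h := hstrict.toOpenPartialHomeomorph f
  obtain ⟨K, hKp, hKU, hK⟩ := local_compact_nhds (Filter.inter_mem hU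
    (h.open_source.mem_nhds hstrict.mem_toOpenPartialHomeomorph_source))
  refine ⟨K, hKU.trans Set.inter_subset_left, hK,
    h.injOn.mono (hKU.trans Set.inter_subset_right), ?_⟩
  rw [← hstrict.map_nhds_eq_of_equiv]
  exact Filter.image_mem_map hKp

section Mass

variable [MeasurableSpace V] [BorelSpace V] {k : ℕ}

theorem setIntegral_image_add_setIntegral_image_logDensity_le {f : V → V} (hf : Conformal f)
    (hf₁ : ContDiff ℝ 1 f) (hk : Module.finrank ℝ V = k + 2) {C : ℝ}
    (hC : ∀ x, ‖f x‖ ≤ C * (1 + ‖x‖)) {K L : Set V} (hK : IsCompact K) (hL : IsCompact L)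
    (hKL : Disjoint K L) (hKinj : Set.InjOn f K) (hLinj : Set.InjOn f L) :
    (∫ y in f '' K, logDensity k y) + ∫ y in f '' L, logDensity k y ≤
      ∫ y : V, logDensity k y := by
  have hcov : ∀ {S : Set V}, IsCompact S → Set.InjOn f S → ∫ y in f '' S, logDensity k y =
      ∫ x in S, |(fderiv ℝ f x).det| * logDensity k (f x) := fun hS hinj =>
    integral_image_eq_integral_abs_det_fderiv_smul volume hS.measurableSet
      (fun x _ => (hf.differentiable x).hasFDerivAt.hasFDerivWithinAt) hinj _
  have hcont : Continuous fun x => |(fderiv ℝ f x).det| * logDensity k (f x) :=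
    (ContinuousLinearMap.continuous_det.comp (hf₁.continuous_fderiv one_ne_zero)).abs.mul
      ((continuous_logDensity k).comp hf₁.continuous)
  rw [hcov hK hKinj, hcov hL hLinj, ← setIntegral_union hKL hL.measurableSet
    (hcont.continuousOn.integrableOn_compact hK) (hcont.continuousOn.integrableOn_compact hL)]
  exact setIntegral_abs_det_mul_logDensity_comp_le hf hf₁ hk hC (hK.union hL)

theorem two_mul_setIntegral_ball_logDensity_le {f : V → V} (hf : Conformal f)
    (hf₁ : ContDiff ℝ 1 f) (hk : Module.finrank ℝ V = k + 2) {C : ℝ}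
    (hC : ∀ x, ‖f x‖ ≤ C * (1 + ‖x‖)) {K L : Set V} (hK : IsCompact K) (hL : IsCompact L)
    (hKL : Disjoint K L) (hKinj : Set.InjOn f K) (hLinj : Set.InjOn f L) {y : V} {ρ c : ℝ}
    (hyK : ball y ρ ⊆ f '' K) (hyL : ball y ρ ⊆ f '' L) (hc : 0 < c) :
    2 * ∫ z in ball (0 : V) (c * ρ), logDensity k z ≤ ∫ z : V, logDensity k z := by
  set F : V → V := fun x => c • (f x - y)
  have hF : Conformal F := fun x => by
    obtain ⟨f', hf', hconf⟩ := hf x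
    exact ⟨c • f', (hf'.sub_const y).const_smul c, hconf.smul hc.ne'⟩
  have hF₁ : ContDiff ℝ 1 F := (hf₁.sub contDiff_const).const_smul c
  have hFC : ∀ x, ‖F x‖ ≤ c * (C + ‖y‖) * (1 + ‖x‖) := fun x => by
    calc ‖F x‖ = c * ‖f x - y‖ := by rw [norm_smul, Real.norm_of_nonneg hc.le]
      _ ≤ c * (C * (1 + ‖x‖) + ‖y‖ * (1 + ‖x‖)) := by
        gcongr
        refine (norm_sub_le _ _).trans (add_le_add (hC x) ?_)
        exact le_mul_of_one_le_right (norm_nonneg y) (by linarith [norm_nonneg x])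
      _ = c * (C + ‖y‖) * (1 + ‖x‖) := by ring
  have hinj : ∀ {S : Set V}, Set.InjOn f S → Set.InjOn F S := fun hS p hp q hq hpq =>
    hS hp hq (sub_left_injective (smul_right_injective V hc.ne' hpq))
  have hball : ∀ {S : Set V}, ball y ρ ⊆ f '' S →
      ∫ z in ball (0 : V) (c * ρ), logDensity k z ≤ ∫ z in F '' S, logDensity k z := by
    intro S hyS
    refine setIntegral_mono_set (integrable_logDensity hk).integrableOn
      (.of_forall fun z => logDensity_nonneg k z) (LE.le.eventuallyLE fun z hz => ?_)
    obtain ⟨x, hxS, hx⟩ : y + c⁻¹ • z ∈ f '' S := hyS <| by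
      rw [mem_ball_zero_iff] at hz
      rwa [mem_ball_iff_norm, add_sub_cancel_left, norm_smul, norm_inv, Real.norm_of_nonneg hc.le,
        inv_mul_lt_iff₀ hc]
    exact ⟨x, hxS, by simp [F, hx, smul_inv_smul₀ hc.ne']⟩
  linarith [hball hyK, hball hyL, setIntegral_image_add_setIntegral_image_logDensity_le hF
    hF₁ hk hFC hK hL hKL (hinj hKinj) (hinj hLinj)]

end Mass

/-- Two preimages of a point would make the rescaled map `c • (f - f p)` cover a ball of radius
comparable to `c` twice, which contradicts the mass bound as `c → ∞`. -/
theorem injective_of_conformal_of_finrank_eq_add_two {f : V → V} {k : ℕ}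
    (hf : Conformal f) (hf₁ : ContDiff ℝ 1 f) (hk : Module.finrank ℝ V = k + 2) {C : ℝ}
    (hC : ∀ x, ‖f x‖ ≤ C * (1 + ‖x‖)) : Function.Injective f := by
  borelize V
  intro p q hpq
  by_contra hne
  obtain ⟨U, W, hU, hW, hUW⟩ := t2_separation_nhds hne
  obtain ⟨K, hKU, hK, hKinj, hKnhds⟩ := exists_isCompact_injOn_image_mem_nhds hf₁
    (isInvertible_fderiv_of_conformal hf p) hU
  obtain ⟨L, hLW, hL, hLinj, hLnhds⟩ := exists_isCompact_injOn_image_mem_nhds hf₁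
    (isInvertible_fderiv_of_conformal hf q) hW
  obtain ⟨ρ, hρ, hball⟩ := Metric.mem_nhds_iff.1 (Filter.inter_mem hKnhds (hpq ▸ hLnhds))
  rw [Set.subset_inter_iff] at hball
  have hlim : Tendsto (fun c => 2 * ∫ z in ball (0 : V) (c * ρ), logDensity k z) atTop
      (𝓝 (2 * ∫ z : V, logDensity k z)) :=
    ((aecover_ball (tendsto_id.atTop_mul_const hρ)).integral_tendsto_of_countably_generated
      (integrable_logDensity hk)).const_mul 2
  have hle := le_of_tendsto hlim ((eventually_gt_atTop 0).mono fun c hc =>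
    two_mul_setIntegral_ball_logDensity_le hf hf₁ hk hC hK hL (hUW.mono hKU hLW) hKinj hLinj
      hball.1 hball.2 hc)
  linarith [integral_logDensity_pos hk]

theorem injective_of_conformal {f : V → V} (hf : Conformal f) (hf₁ : ContDiff ℝ 1 f) {C : ℝ}
    (hC : ∀ x, ‖f x‖ ≤ C * (1 + ‖x‖)) : Function.Injective f := by
  rcases le_or_gt (Module.finrank ℝ V) 1 with hdim | hdim
  · exact injective_of_conformal_of_finrank_le_one hf hdim
  · obtain ⟨k, hk⟩ := Nat.exists_eq_add_of_lt hdim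
    exact injective_of_conformal_of_finrank_eq_add_two hf hf₁ (k := k) (by omega) hC

end Injectivity

section Surjectivity

variable {V W : Type*} [NormedAddCommGroup V] [NormedSpace ℝ V] [NormedAddCommGroup W]
  [NormedSpace ℝ W] {f : V → W} {f' : V → V →L[ℝ] W} {x : V} {v : W} {ρ s t : ℝ}

/-- Moving from `z` in the direction `h` with `f' h = v - f z` decreases the first term at unit
speed relative to `‖f z - v‖` and increases the second one at relative speed at most `t / s`. -/
theorem eventually_norm_sub_add_lt {f' : V →L[ℝ] W} {z h : V} (hf : HasFDerivAt f f' z)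
    (hh : f' h = v - f z) (hv : f z ≠ v) (hs : s * ‖h‖ ≤ ‖v - f z‖) (ht : 0 < t) (hts : t < s) :
    ∀ᶠ τ in 𝓝[>] (0 : ℝ),
      ‖f (z + τ • h) - v‖ + t * ‖z + τ • h - x‖ < ‖f z - v‖ + t * ‖z - x‖ := by
  have hpos : 0 < ‖v - f z‖ := norm_sub_pos_iff.2 hv.symm
  have hth : t * ‖h‖ < ‖v - f z‖ := by
    rw [← mul_lt_mul_iff_right₀ (ht.trans hts)]
    nlinarith
  have hline : HasDerivAt (fun τ : ℝ => z + τ • h) h 0 := by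
    simpa using ((hasDerivAt_id (0 : ℝ)).smul_const h).const_add z
  have hcomp : HasDerivAt (fun τ : ℝ => f (z + τ • h)) (v - f z) 0 := by
    rw [← hh]
    exact HasFDerivAt.comp_hasDerivAt 0 (by simpa using hf) hline
  have hsmall := (hasDerivAt_iff_isLittleO_nhds_zero.1 hcomp).def
    (half_pos (sub_pos.2 hth))
  filter_upwards [hsmall.filter_mono nhdsWithin_le_nhds, Ioo_mem_nhdsGT zero_lt_one]
    with τ hτ ⟨hτ₀, hτ₁⟩
  simp only [zero_add, zero_smul, add_zero, Real.norm_of_nonneg hτ₀.le] at hτ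
  have hf_le : ‖f (z + τ • h) - v‖ ≤
      (‖v - f z‖ - t * ‖h‖) / 2 * τ + (1 - τ) * ‖v - f z‖ := by
    calc _ = ‖(f (z + τ • h) - f z - τ • (v - f z)) - (1 - τ) • (v - f z)‖ := by
          congr 1
          module
      _ ≤ _ := (norm_sub_le _ _).trans (add_le_add hτ (by
          rw [norm_smul, Real.norm_of_nonneg (sub_nonneg.2 hτ₁.le)]))
  have hx_le : ‖z + τ • h - x‖ ≤ ‖z - x‖ + τ * ‖h‖ := by
    rw [add_sub_right_comm]
    exact (norm_add_le _ _).trans (by rw [norm_smul, Real.norm_of_nonneg hτ₀.le])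
  rw [norm_sub_rev (f z)]
  nlinarith [mul_pos hτ₀ (sub_pos.2 hth)]

/-- If `f'` has right inverses of norm at most `1 / s` on a ball, then `f` maps this ball onto a
ball: a minimiser `z` of `‖f z - v‖ + t * ‖z - x‖` satisfies `f z = v`. -/
theorem exists_eq_of_forall_exists_preimage [ProperSpace V]
    (hf : ∀ z ∈ closedBall x ρ, HasFDerivAt f (f' z) z)
    (hsurj : ∀ z ∈ closedBall x ρ, ∀ w, ∃ h, f' z h = w ∧ s * ‖h‖ ≤ ‖w‖) (ht : 0 < t)
    (hts : t < s) (hv : ‖f x - v‖ < t * ρ) :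
    ∃ z, f z = v ∧ t * ‖z - x‖ ≤ ‖f x - v‖ := by
  have hρ : 0 < ρ := pos_of_mul_pos_right ((norm_nonneg _).trans_lt hv) ht.le
  obtain ⟨z, hz, hmin⟩ := (isCompact_closedBall x ρ).exists_isMinOn ⟨x, mem_closedBall_self hρ.le⟩
    (f := fun z => ‖f z - v‖ + t * ‖z - x‖) (by
      have hcont : ContinuousOn f (closedBall x ρ) := fun z hz =>
        (hf z hz).continuousAt.continuousWithinAt
      fun_prop)
  have hzx : ‖f z - v‖ + t * ‖z - x‖ ≤ ‖f x - v‖ := by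
    simpa using hmin (mem_closedBall_self hρ.le)
  have hzρ : z ∈ ball x ρ := by
    rw [mem_ball_iff_norm, ← mul_lt_mul_iff_right₀ ht]
    linarith [norm_nonneg (f z - v)]
  refine ⟨z, by_contra fun hne => ?_, by linarith [norm_nonneg (f z - v)]⟩
  obtain ⟨h, hh, hs⟩ := hsurj z hz (v - f z)
  have hstay : ∀ᶠ τ in 𝓝[>] (0 : ℝ), z + τ • h ∈ ball x ρ := by
    have hcont : Continuous fun τ : ℝ => z + τ • h := by fun_prop
    exact (hcont.tendsto' 0 z (by simp)).mono_left nhdsWithin_le_nhds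
      (isOpen_ball.mem_nhds hzρ)
  obtain ⟨τ, hτ, hτρ⟩ := ((eventually_norm_sub_add_lt (x := x) (hf z hz) hh hne hs ht hts).and
    hstay).exists
  exact hτ.not_ge (hmin (ball_subset_closedBall hτρ))

theorem mul_le_norm_sub_of_injective [ProperSpace V] (hinj : Function.Injective f)
    (hf : ∀ z ∈ closedBall x ρ, HasFDerivAt f (f' z) z)
    (hsurj : ∀ z ∈ closedBall x ρ, ∀ w, ∃ h, f' z h = w ∧ s * ‖h‖ ≤ ‖w‖) (hρ : 0 < ρ) {y : V}
    (hxy : ρ ≤ ‖y - x‖) : s * ρ ≤ ‖f x - f y‖ := by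
  by_contra! hlt
  obtain ⟨t, ht, hts⟩ := exists_between ((div_lt_iff₀ hρ).2 hlt)
  have ht₀ : 0 < t := (div_nonneg (norm_nonneg _) hρ.le).trans_lt ht
  rw [div_lt_iff₀ hρ] at ht
  obtain ⟨z, hz, hzx⟩ := exists_eq_of_forall_exists_preimage hf hsurj ht₀ hts ht
  rw [hinj hz] at hzx
  nlinarith

end Surjectivity

section WordMap

variable {A : Type*}

theorem wordMap_add {X : Type*} (φ : A → X → X) (n k : ℕ) (a : ℕ → A) :
    wordMap φ (n + k) a = wordMap φ n a ∘ wordMap φ k fun j => a (j + n) := by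
  induction n generalizing a with
  | zero => simp [wordMap]
  | succ n ih =>
    rw [Nat.add_right_comm, wordMap, ih, wordMap, Function.comp_assoc]
    rfl

theorem wordMap_congr {X : Type*} (φ : A → X → X) {n : ℕ} {a a' : ℕ → A}
    (h : ∀ k < n, a k = a' k) : wordMap φ n a = wordMap φ n a' := by
  induction n generalizing a a' with
  | zero => rfl
  | succ n ih =>
    rw [wordMap, wordMap, h 0 n.succ_pos, ih fun k hk => h (k + 1) (Nat.succ_lt_succ hk)]

theorem mapsTo_wordMap {X : Type*} {φ : A → X → X} {K : Set X} (h : ∀ a, Set.MapsTo (φ a) K K)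
    (n : ℕ) (a : ℕ → A) : Set.MapsTo (wordMap φ n a) K K := by
  induction n generalizing a with
  | zero => exact Set.mapsTo_id K
  | succ n ih => exact (h _).comp (ih _)

theorem lipschitzWith_wordMap {X : Type*} [PseudoEMetricSpace X] {φ : A → X → X} {q : NNReal}
    (h : ∀ a, LipschitzWith q (φ a)) (n : ℕ) (a : ℕ → A) :
    LipschitzWith (q ^ n) (wordMap φ n a) := by
  induction n generalizing a with
  | zero => simpa [wordMap] using LipschitzWith.id
  | succ n ih => exact pow_succ' q n ▸ (h _).comp (ih _)

variable {V : Type*} [NormedAddCommGroup V] [NormedSpace ℝ V] {φ : A → V → V}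

theorem contDiff_wordMap {r : WithTop ℕ∞} (h : ∀ a, ContDiff ℝ r (φ a)) (n : ℕ) (a : ℕ → A) :
    ContDiff ℝ r (wordMap φ n a) := by
  induction n generalizing a with
  | zero => exact contDiff_id
  | succ n ih => exact (h _).comp (ih _)

theorem conformal_wordMap (h : ∀ a, Conformal (φ a)) (n : ℕ) (a : ℕ → A) :
    Conformal (wordMap φ n a) := by
  induction n generalizing a with
  | zero => exact conformal_id
  | succ n ih => exact (ih _).comp (h _)

end WordMap

section Distortion

variable {A V : Type*} [NormedAddCommGroup V] [NormedSpace ℝ V] {φ : A → V → V}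

theorem norm_fderiv_wordMap_add (h : ∀ a, Conformal (φ a)) (n k : ℕ) (a : ℕ → A) (x : V) :
    ‖fderiv ℝ (wordMap φ (n + k) a) x‖ =
      ‖fderiv ℝ (wordMap φ n a) (wordMap φ k (fun j => a (j + n)) x)‖ *
        ‖fderiv ℝ (wordMap φ k fun j => a (j + n)) x‖ := by
  have hn := conformal_wordMap h n a
  rw [wordMap_add, fderiv_comp x (hn.differentiable _) ((conformal_wordMap h k _).differentiable x)]
  exact norm_comp_of_isConformalMap (conformalAt_iff_isConformalMap_fderiv.1 (hn _)) _

theorem norm_fderiv_wordMap_succ (h : ∀ a, Conformal (φ a)) (n : ℕ) (a : ℕ → A) (x : V) :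
    ‖fderiv ℝ (wordMap φ (n + 1) a) x‖ =
      ‖fderiv ℝ (wordMap φ n a) (φ (a n) x)‖ * ‖fderiv ℝ (φ (a n)) x‖ := by
  have hone : (wordMap φ 1 fun j => a (j + n)) = φ (a n) := by simp [wordMap]
  rw [norm_fderiv_wordMap_add h, hone]

theorem le_exp_mul_of_abs_sub_le {u v m H : ℝ} (hm : 0 < m) (hmv : m ≤ v) (hH : 0 ≤ H)
    (h : |u - v| ≤ H) : u ≤ Real.exp (H / m) * v :=
  calc u ≤ v + H / m * m := by rw [div_mul_cancel₀ _ hm.ne']; linarith [le_of_abs_le h]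
    _ ≤ v + H / m * v := by gcongr
    _ = (H / m + 1) * v := by ring
    _ ≤ Real.exp (H / m) * v := by
      gcongr
      · exact hm.le.trans hmv
      · exact Real.add_one_le_exp _

/-- Bounded distortion, by appending letters: the exponent `B` is the fixed point of
`B ↦ B * q ^ α + B * (1 - q ^ α)`. -/
theorem norm_fderiv_wordMap_le_exp_mul (h : ∀ a, Conformal (φ a)) {K : Set V}
    (hK : ∀ a, Set.MapsTo (φ a) K K) {q : NNReal} (hq : ∀ a, LipschitzWith q (φ a)) {B α : ℝ}
    (hB : 0 ≤ B) (hα : 0 ≤ α)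
    (hφ : ∀ a, ∀ x ∈ K, ∀ y ∈ K, ‖fderiv ℝ (φ a) x‖ ≤
      Real.exp (B * (1 - q ^ α) * dist x y ^ α) * ‖fderiv ℝ (φ a) y‖)
    (n : ℕ) (a : ℕ → A) {x y : V} (hx : x ∈ K) (hy : y ∈ K) :
    ‖fderiv ℝ (wordMap φ n a) x‖ ≤
      Real.exp (B * dist x y ^ α) * ‖fderiv ℝ (wordMap φ n a) y‖ := by
  induction n generalizing x y with
  | zero =>
    have hexp := Real.one_le_exp (show 0 ≤ B * dist x y ^ α by positivity)
    simpa [wordMap] using le_mul_of_one_le_left (norm_nonneg (ContinuousLinearMap.id ℝ V)) hexp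
  | succ n ih =>
    have hdist : dist (φ (a n) x) (φ (a n) y) ^ α ≤ q ^ α * dist x y ^ α := by
      rw [← Real.mul_rpow q.coe_nonneg dist_nonneg]
      exact Real.rpow_le_rpow dist_nonneg ((hq _).dist_le_mul x y) hα
    rw [norm_fderiv_wordMap_succ h, norm_fderiv_wordMap_succ h]
    calc ‖fderiv ℝ (wordMap φ n a) (φ (a n) x)‖ * ‖fderiv ℝ (φ (a n)) x‖
      _ ≤ (Real.exp (B * (q ^ α * dist x y ^ α)) * ‖fderiv ℝ (wordMap φ n a) (φ (a n) y)‖) *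
          (Real.exp (B * (1 - q ^ α) * dist x y ^ α) * ‖fderiv ℝ (φ (a n)) y‖) := by
        gcongr
        · refine (ih (hK (a n) hx) (hK (a n) hy)).trans ?_
          gcongr
        · exact hφ _ x hx y hy
      _ = Real.exp (B * dist x y ^ α) * (‖fderiv ℝ (wordMap φ n a) (φ (a n) y)‖ *
          ‖fderiv ℝ (φ (a n)) y‖) := by
        rw [mul_mul_mul_comm, ← Real.exp_add]
        ring_nf

end Distortion

section IsSelfConformalIFS

variable {A V : Type*} [Fintype A] [NormedAddCommGroup V] [NormedSpace ℝ V] {φ : A → V → V}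

namespace IsSelfConformalIFS

theorem conformal (h : IsSelfConformalIFS φ) (a : A) : Conformal (φ a) := fun x =>
  conformalAt_iff_isConformalMap_fderiv.2
    (isConformalMap_of_norm_map (h.2.2.2.1 a x).1 (h.2.2.2.1 a x).2)

theorem exists_lipschitzWith (h : IsSelfConformalIFS φ) :
    ∃ q : NNReal, q < 1 ∧ ∀ a, LipschitzWith q (φ a) := by
  have : Nonempty A := Fintype.card_pos_iff.1 (by linarith [h.1])
  choose r hr using h.2.1
  obtain ⟨b, hb⟩ := Finite.exists_max r
  refine ⟨⟨r b, (hr b).1.le⟩, (hr b).2.1, fun a => .of_dist_le_mul fun x y => ?_⟩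
  rw [dist_eq_norm, dist_eq_norm]
  exact ((hr a).2.2 x y).trans (mul_le_mul_of_nonneg_right (hb a) (norm_nonneg _))

theorem exists_le_norm_fderiv (h : IsSelfConformalIFS φ) {K : Set V} (hK : IsCompact K) :
    ∃ m > 0, ∀ a, ∀ x ∈ K, m ≤ ‖fderiv ℝ (φ a) x‖ := by
  have : Nonempty A := Fintype.card_pos_iff.1 (by linarith [h.1])
  have hle : ∀ a, ∃ m > 0, ∀ x ∈ K, m ≤ ‖fderiv ℝ (φ a) x‖ := fun a =>
    hK.exists_forall_le' ((h.2.2.1 a).continuous_fderiv one_ne_zero).norm.continuousOn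
      fun x _ => (h.2.2.2.1 a x).1
  choose m hm hle using hle
  obtain ⟨b, hb⟩ := Finite.exists_min m
  exact ⟨m b, hm b, fun a x hx => (hb a).trans (hle a x hx)⟩

theorem exists_norm_fderiv_wordMap_le_mul (h : IsSelfConformalIFS φ) {K : Set V}
    (hK : IsCompact K) (hmaps : ∀ a, Set.MapsTo (φ a) K K) :
    ∃ C ≥ 1, ∀ n a, ∀ x ∈ K, ∀ y ∈ K,
      ‖fderiv ℝ (wordMap φ n a) x‖ ≤ C * ‖fderiv ℝ (wordMap φ n a) y‖ := by
  obtain ⟨q, hq₁, hq⟩ := h.exists_lipschitzWith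
  obtain ⟨m, hm, hmle⟩ := h.exists_le_norm_fderiv hK
  obtain ⟨H, α, hH, hα, hHolder⟩ := h.2.2.2.2.1
  have hqα : (0 : ℝ) < 1 - q ^ α := sub_pos.2 (Real.rpow_lt_one q.coe_nonneg hq₁ hα)
  set B := H / m / (1 - q ^ α)
  have hdistortion : ∀ a, ∀ x ∈ K, ∀ y ∈ K, ‖fderiv ℝ (φ a) x‖ ≤
      Real.exp (B * (1 - q ^ α) * dist x y ^ α) * ‖fderiv ℝ (φ a) y‖ := fun a x _ y hy => by
    rw [div_mul_cancel₀ _ hqα.ne', div_mul_eq_mul_div]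
    refine le_exp_mul_of_abs_sub_le hm (hmle a y hy) (by positivity) ?_
    exact dist_eq_norm x y ▸ hHolder a x y
  refine ⟨Real.exp (B * diam K ^ α), Real.one_le_exp (by positivity), fun n a x hx y hy =>
    (norm_fderiv_wordMap_le_exp_mul h.conformal hmaps hq (by positivity) hα.le hdistortion
      n a hx hy).trans ?_⟩
  gcongr
  exact dist_le_diam_of_mem hK.isBounded hx hy

end IsSelfConformalIFS

end IsSelfConformalIFS

section MinExpansion

variable {V : Type*} [NormedAddCommGroup V] [NormedSpace ℝ V] {K : Set V} {f : V → V} {x y : V}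

/-- The smallest local expansion factor of `f` on `K`. -/
def minExpansion (K : Set V) (f : V → V) : ℝ :=
  ⨅ x : K, ‖fderiv ℝ f x‖

theorem minExpansion_nonneg (K : Set V) (f : V → V) : 0 ≤ minExpansion K f :=
  Real.iInf_nonneg fun _ => norm_nonneg _

theorem minExpansion_le (hx : x ∈ K) : minExpansion K f ≤ ‖fderiv ℝ f x‖ :=
  ciInf_le ⟨0, Set.forall_mem_range.2 fun _ => norm_nonneg _⟩ (⟨x, hx⟩ : K)

theorem le_minExpansion (hK : K.Nonempty) {s : ℝ} (hs : ∀ x ∈ K, s ≤ ‖fderiv ℝ f x‖) :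
    s ≤ minExpansion K f :=
  have := hK.to_subtype
  le_ciInf fun x : K => hs x x.2

theorem minExpansion_id [Nontrivial V] (hK : K.Nonempty) : minExpansion K (id : V → V) = 1 :=
  have := hK.to_subtype
  (congrArg iInf (funext fun x : K => by simp)).trans ciInf_const

theorem norm_fderiv_le_mul_minExpansion {C : ℝ} (hC : 0 < C)
    (hdist : ∀ x ∈ K, ∀ y ∈ K, ‖fderiv ℝ f x‖ ≤ C * ‖fderiv ℝ f y‖) (hx : x ∈ K) :
    ‖fderiv ℝ f x‖ ≤ C * minExpansion K f := by
  rw [← div_le_iff₀' hC]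
  exact le_minExpansion ⟨x, hx⟩ fun y hy => (div_le_iff₀' hC).2 (hdist x hx y hy)

theorem dist_le_mul_minExpansion_mul_dist (hf : Differentiable ℝ f) (hconv : Convex ℝ K) {C : ℝ}
    (hC : 0 < C) (hdist : ∀ x ∈ K, ∀ y ∈ K, ‖fderiv ℝ f x‖ ≤ C * ‖fderiv ℝ f y‖) (hx : x ∈ K)
    (hy : y ∈ K) : dist (f x) (f y) ≤ C * minExpansion K f * dist x y := by
  rw [dist_eq_norm, dist_eq_norm]
  exact hconv.norm_image_sub_le_of_norm_fderiv_le (fun z _ => hf z)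
    (fun z hz => norm_fderiv_le_mul_minExpansion hC hdist hz) hy hx

theorem mul_minExpansion_le_wordMap_succ {A : Type*} {φ : A → V → V}
    (h : ∀ a, Conformal (φ a)) (hK : K.Nonempty) (hmaps : ∀ a, Set.MapsTo (φ a) K K) {m : ℝ}
    (hm : 0 ≤ m) (hmφ : ∀ a, ∀ x ∈ K, m ≤ ‖fderiv ℝ (φ a) x‖) (n : ℕ) (a : ℕ → A) :
    m * minExpansion K (wordMap φ n a) ≤ minExpansion K (wordMap φ (n + 1) a) :=
  le_minExpansion hK fun x hx => by
    rw [norm_fderiv_wordMap_succ h, mul_comm]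
    exact mul_le_mul (minExpansion_le (hmaps _ hx)) (hmφ _ x hx) hm (norm_nonneg _)

theorem minExpansion_wordMap_add_le {A : Type*} {φ : A → V → V} (h : ∀ a, Conformal (φ a))
    (hK : K.Nonempty) (hmaps : ∀ a, Set.MapsTo (φ a) K K) {q : NNReal}
    (hq : ∀ a, LipschitzWith q (φ a)) {C : ℝ} (hC : 0 < C) {n : ℕ} {a : ℕ → A}
    (hdist : ∀ x ∈ K, ∀ y ∈ K,
      ‖fderiv ℝ (wordMap φ n a) x‖ ≤ C * ‖fderiv ℝ (wordMap φ n a) y‖) (k : ℕ) :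
    minExpansion K (wordMap φ (n + k) a) ≤ C * q ^ k * minExpansion K (wordMap φ n a) := by
  obtain ⟨x, hx⟩ := hK
  have hμ := minExpansion_nonneg K (wordMap φ n a)
  refine (minExpansion_le hx).trans ?_
  rw [norm_fderiv_wordMap_add h, mul_right_comm]
  gcongr
  · exact norm_fderiv_le_mul_minExpansion hC hdist (mapsTo_wordMap hmaps k _ hx)
  · exact_mod_cast norm_fderiv_le_of_lipschitz ℝ (lipschitzWith_wordMap hq k _)

end MinExpansion

section LowerBound

variable {V : Type*} [NormedAddCommGroup V] [InnerProductSpace ℝ V] [FiniteDimensional ℝ V]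
  {f : V → V} {q : NNReal}

theorem injective_of_conformal_of_lipschitzWith (hf : Conformal f) (hf₁ : ContDiff ℝ 1 f)
    (hq : LipschitzWith q f) : Function.Injective f :=
  injective_of_conformal hf hf₁ (C := ‖f 0‖ + q) fun x => by
    have hx := hq.norm_sub_le x 0
    rw [sub_zero] at hx
    nlinarith [norm_sub_norm_le (f x) (f 0), mul_nonneg (norm_nonneg (f 0)) (norm_nonneg x),
      q.coe_nonneg]

theorem mul_minExpansion_le_dist (hf : Conformal f) (hf₁ : ContDiff ℝ 1 f)
    (hq : LipschitzWith q f) {K : Set V} {x y : V} {c : ℝ} (hK : closedBall x c ⊆ K) (hc : 0 < c)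
    (hxy : c ≤ dist x y) : c * minExpansion K f ≤ dist (f x) (f y) := by
  rw [mul_comm, dist_eq_norm]
  refine mul_le_norm_sub_of_injective (injective_of_conformal_of_lipschitzWith hf hf₁ hq)
    (fun z _ => (hf.differentiable z).hasFDerivAt) (fun z hz w => ?_) hc
    (by rwa [← dist_eq_norm, dist_comm])
  obtain ⟨h, rfl⟩ := (isInvertible_fderiv_of_conformal hf z).bijective.surjective w
  refine ⟨h, rfl, ?_⟩
  rw [norm_apply_of_isConformalMap (conformalAt_iff_isConformalMap_fderiv.1 (hf z))]
  gcongr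
  exact minExpansion_le (hK hz)

end LowerBound

section CylinderScale

theorem exists_closedBall_mapsTo {A V : Type*} [Finite A] [NormedAddCommGroup V]
    {φ : A → V → V} {q : NNReal} (hq₁ : q < 1) (hq : ∀ a, LipschitzWith q (φ a)) {S : Set V}
    (hS : Bornology.IsBounded S) :
    ∃ R ≥ 0, S ⊆ closedBall 0 R ∧ ∀ a, Set.MapsTo (φ a) (closedBall 0 R) (closedBall 0 R) := by
  obtain ⟨R₀, hR₀⟩ := hS.subset_closedBall 0
  obtain ⟨M, hM⟩ := (Set.finite_range fun a => ‖φ a 0‖).bddAbove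
  rw [mem_upperBounds, Set.forall_mem_range] at hM
  have hq₁ : (0 : ℝ) < 1 - q := sub_pos.2 hq₁
  refine ⟨max 0 (max R₀ (M / (1 - q))), le_max_left _ _,
    hR₀.trans (closedBall_subset_closedBall (by simp)), fun a x hx => ?_⟩
  set R := max 0 (max R₀ (M / (1 - q)))
  have hMR : M ≤ R * (1 - q) := by
    rw [← div_le_iff₀ hq₁]
    exact (le_max_right _ _).trans (le_max_right _ _)
  rw [mem_closedBall_zero_iff] at hx ⊢
  have hlip := (hq a).norm_sub_le x 0
  rw [sub_zero] at hlip
  nlinarith [norm_sub_norm_le (φ a x) (φ a 0), hM a, q.coe_nonneg]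

/-- `ℓ n a` is the size of the cylinder `wordMap φ n a '' X`: up to the constant `L` it bounds the
distances in the cylinder of points coming from `c`-separated points of `X`, and as the word gets
longer it decays at a rate between `m` and `q`. -/
structure IsCylinderScale {A E : Type*} [PseudoMetricSpace E] (φ : A → E → E) (X : Set E)
    (c L m q : ℝ) (ℓ : ℕ → (ℕ → A) → ℝ) : Prop where
  one_le : 1 ≤ L
  pos : 0 < m
  le_one : m ≤ 1
  nonneg : 0 ≤ q
  lt_one : q < 1
  scale_zero : ∀ a, ℓ 0 a = c
  scale_le_dist : ∀ n a, ∀ x ∈ X, ∀ y ∈ X, c ≤ dist x y →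
    ℓ n a ≤ dist (wordMap φ n a x) (wordMap φ n a y)
  dist_le_mul_scale : ∀ n a, ∀ x ∈ X, ∀ y ∈ X,
    dist (wordMap φ n a x) (wordMap φ n a y) ≤ L * ℓ n a
  mul_scale_le_scale_succ : ∀ n a, m * ℓ n a ≤ ℓ (n + 1) a
  scale_add_le : ∀ n k a, ℓ (n + k) a ≤ L * q ^ k * ℓ n a

variable {A V : Type*} [NormedAddCommGroup V] [InnerProductSpace ℝ V] [FiniteDimensional ℝ V]
  {φ : A → V → V} {X : Set V} {c : ℝ}

theorem isCylinderScale_minExpansion [Nontrivial V] (hφ : ∀ a, Conformal (φ a))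
    (hφ₁ : ∀ a, ContDiff ℝ 1 (φ a)) {q : NNReal} (hq₁ : q < 1) (hq : ∀ a, LipschitzWith q (φ a))
    {K : Set V} (hbdd : Bornology.IsBounded K) (hconv : Convex ℝ K) (hne : K.Nonempty)
    (hmaps : ∀ a, Set.MapsTo (φ a) K K) (hc : 0 < c) (hX : cthickening c X ⊆ K) {m C : ℝ}
    (hm : 0 < m) (hm₁ : m ≤ 1) (hmφ : ∀ a, ∀ x ∈ K, m ≤ ‖fderiv ℝ (φ a) x‖) (hC : 1 ≤ C)
    (hdist : ∀ n a, ∀ x ∈ K, ∀ y ∈ K,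
      ‖fderiv ℝ (wordMap φ n a) x‖ ≤ C * ‖fderiv ℝ (wordMap φ n a) y‖) :
    IsCylinderScale φ X c (C * (1 + diam K / c)) m q
      fun n a => c * minExpansion K (wordMap φ n a) := by
  have hC₀ : 0 < C := zero_lt_one.trans_le hC
  have hXK : X ⊆ K := (self_subset_cthickening X).trans hX
  have hCL : C ≤ C * (1 + diam K / c) :=
    le_mul_of_one_le_right hC₀.le (le_add_of_nonneg_right (by positivity))
  refine ⟨hC.trans hCL, hm, hm₁, q.coe_nonneg, hq₁, fun a => ?_,
    fun n a x hx y _ hxy => ?_, fun n a x hx y hy => ?_, fun n a => ?_, fun n k a => ?_⟩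
  · rw [wordMap, minExpansion_id hne, mul_one]
  · exact mul_minExpansion_le_dist (conformal_wordMap hφ n a) (contDiff_wordMap hφ₁ n a)
      (lipschitzWith_wordMap hq n a) ((closedBall_subset_cthickening hx c).trans hX) hc hxy
  · have hμ := minExpansion_nonneg K (wordMap φ n a)
    calc dist (wordMap φ n a x) (wordMap φ n a y)
      _ ≤ C * minExpansion K (wordMap φ n a) * dist x y := dist_le_mul_minExpansion_mul_dist
        (conformal_wordMap hφ n a).differentiable hconv hC₀ (hdist n a) (hXK hx) (hXK hy)
      _ ≤ C * minExpansion K (wordMap φ n a) * (c + diam K) := by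
        gcongr
        exact (dist_le_diam_of_mem hbdd (hXK hx) (hXK hy)).trans (by linarith)
      _ = C * (1 + diam K / c) * (c * minExpansion K (wordMap φ n a)) := by field_simp
  · rw [mul_left_comm]
    gcongr
    exact mul_minExpansion_le_wordMap_succ hφ hne hmaps hm.le hmφ n a
  · rw [mul_left_comm]
    have hμ := minExpansion_nonneg K (wordMap φ n a)
    gcongr
    refine (minExpansion_wordMap_add_le hφ hne hmaps hq hC₀ (hdist n a) k).trans ?_
    gcongr

theorem IsSelfConformalIFS.exists_isCylinderScale [Fintype A] (h : IsSelfConformalIFS φ)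
    (hX : Bornology.IsBounded X) (hc : 0 < c) : ∃ L m q ℓ, IsCylinderScale φ X c L m q ℓ := by
  have : Nontrivial V := by
    obtain ⟨-, -, x, y, -, -, hxy⟩ := h.2.2.2.2.2
    exact nontrivial_of_ne x y hxy
  obtain ⟨q, hq₁, hq⟩ := h.exists_lipschitzWith
  obtain ⟨R, hR, hball, hmaps⟩ := exists_closedBall_mapsTo hq₁ hq (hX.cthickening (δ := c))
  have hK : IsCompact (closedBall (0 : V) R) := isCompact_closedBall 0 R
  obtain ⟨m, hm, hmφ⟩ := h.exists_le_norm_fderiv hK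
  obtain ⟨C, hC, hdist⟩ := h.exists_norm_fderiv_wordMap_le_mul hK hmaps
  exact ⟨_, _, _, _, isCylinderScale_minExpansion h.conformal h.2.2.1 hq₁ hq hK.isBounded
    (convex_closedBall 0 R) (nonempty_closedBall.2 hR) hmaps hc hball (lt_min hm one_pos)
    (min_le_right m 1) (fun a x hx => (min_le_left m 1).trans (hmφ a x hx)) hC hdist⟩

end CylinderScale

theorem setDist_le_dist {V : Type*} [NormedAddCommGroup V] {S T : Set V} {x y : V} (hx : x ∈ S)
    (hy : y ∈ T) : setDist S T ≤ dist x y :=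
  csInf_le ⟨0, Set.forall_mem_image2.2 fun _ _ _ _ => dist_nonneg⟩ (Set.mem_image2_of_mem hx hy)

section CylSet

variable {A : Type*} {Ab : A → Set A} {a b : ℕ → A}

theorem shift_mem_cylSet (ha : a ∈ cylSet Ab b) (n : ℕ) :
    (fun j => a (j + n)) ∈ cylSet Ab fun j => b (j + n) :=
  fun j => ha (j + n)

theorem exists_mem_cylSet_ne (hAb : ∀ b, (Ab b).Nontrivial) (b : ℕ → A) :
    ∃ a ∈ cylSet Ab b, ∃ a' ∈ cylSet Ab b, a 0 ≠ a' 0 := by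
  choose u hu v hv huv using hAb
  exact ⟨fun n => u (b n), fun n => hu _, fun n => v (b n), fun n => hv _, huv _⟩

end CylSet

/-- `π` codes points of `X` by infinite words, compatibly with the maps `φ`: deleting the first
`n` letters of `a` inverts `wordMap φ n a`. -/
structure IsCoding {A E : Type*} (φ : A → E → E) (X : Set E) (π : (ℕ → A) → E) : Prop where
  mem : ∀ a, π a ∈ X
  wordMap_shift : ∀ n a, wordMap φ n a (π fun j => a (j + n)) = π a

section Coding

variable {A : Type*}

theorem isCoding_of_tendsto {E : Type*} [TopologicalSpace E] [T2Space E] {φ : A → E → E}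
    {X : Set E} (hφ : ∀ n a, Continuous (wordMap φ n a)) (hX : IsClosed X) (hne : X.Nonempty)
    (hmaps : ∀ a, Set.MapsTo (φ a) X X) {π : (ℕ → A) → E}
    (hπ : ∀ a x₀, Tendsto (fun n => wordMap φ n a x₀) atTop (𝓝 (π a))) : IsCoding φ X π where
  mem a :=
    have ⟨x₀, hx₀⟩ := hne
    hX.mem_of_tendsto (hπ a x₀) (Eventually.of_forall fun n => mapsTo_wordMap hmaps n a hx₀)
  wordMap_shift n a := by
    have ⟨x₀, _⟩ := hne
    refine tendsto_nhds_unique (((hφ n a).tendsto _).comp (hπ (fun j => a (j + n)) x₀)) ?_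
    refine ((tendsto_add_atTop_iff_nat n).2 (hπ a x₀)).congr fun k => ?_
    rw [add_comm k n, wordMap_add]
    rfl

theorem IsCoding.image_subset {E : Type*} {φ : A → E → E} {X : Set E} {π : (ℕ → A) → E}
    (h : IsCoding φ X π) (S : Set (ℕ → A)) : π '' S ⊆ X :=
  Set.image_subset_iff.2 fun a _ => h.mem a

theorem IsCoding.le_dist {V : Type*} [NormedAddCommGroup V] {φ : A → V → V} {X : Set V}
    {π : (ℕ → A) → V} (h : IsCoding φ X π) {Ab : A → Set A} {c : ℝ}
    (hsep : ∀ b, ∀ a ∈ Ab b, ∀ a' ∈ Ab b, a ≠ a' → c ≤ setDist (φ a '' X) (φ a' '' X))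
    {a a' b : ℕ → A} (ha : a ∈ cylSet Ab b) (ha' : a' ∈ cylSet Ab b) (hne : a 0 ≠ a' 0) :
    c ≤ dist (π a) (π a') :=
  have hmem : ∀ a, π a ∈ φ (a 0) '' X := fun a => ⟨_, h.mem _, h.wordMap_shift 1 a⟩
  (hsep (b 0) _ (ha 0) _ (ha' 0) hne).trans (setDist_le_dist (hmem a) (hmem a'))

end Coding

namespace IsCylinderScale

variable {A E : Type*} [PseudoMetricSpace E] {φ : A → E → E} {X : Set E} {c L m q : ℝ}
  {ℓ : ℕ → (ℕ → A) → ℝ}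

theorem exists_scale_le (h : IsCylinderScale φ X c L m q ℓ) {s : ℝ} (hs : 0 < s) (a : ℕ → A) :
    ∃ n, ℓ n a ≤ s := by
  have hlim : Tendsto (fun n => L * q ^ n * c) atTop (𝓝 (L * 0 * c)) :=
    ((tendsto_pow_atTop_nhds_zero_of_lt_one h.nonneg h.lt_one).const_mul L).mul_const c
  rw [mul_zero, zero_mul] at hlim
  obtain ⟨n, hn⟩ := (hlim.eventually_le_const hs).exists
  refine ⟨n, le_trans ?_ hn⟩
  simpa [h.scale_zero] using h.scale_add_le 0 n a

theorem pow_mul_scale_le (h : IsCylinderScale φ X c L m q ℓ) (n k : ℕ) (a : ℕ → A) :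
    m ^ k * ℓ n a ≤ ℓ (n + k) a := by
  induction k with
  | zero => simp
  | succ k ih =>
    rw [pow_succ', mul_assoc]
    exact (mul_le_mul_of_nonneg_left ih h.pos.le).trans (h.mul_scale_le_scale_succ (n + k) a)

theorem exists_stopping_time (h : IsCylinderScale φ X c L m q ℓ) {s : ℝ} (hs : 0 < s)
    (hsc : s < c) (a : ℕ → A) :
    ∃ N ≥ 1, ℓ N a ≤ s ∧ m * s ≤ ℓ N a ∧ ∀ j < N, s < ℓ j a := by
  classical
  have hex := h.exists_scale_le hs a
  have hbefore : ∀ j < Nat.find hex, s < ℓ j a := fun j hj => not_le.1 (Nat.find_min hex hj)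
  have hle := Nat.find_spec hex
  obtain ⟨n, hn⟩ : ∃ n, Nat.find hex = n + 1 := Nat.exists_eq_succ_of_ne_zero fun h₀ => by
    rw [h₀, h.scale_zero] at hle
    exact hsc.not_ge hle
  rw [hn] at hbefore hle
  refine ⟨n + 1, n.succ_pos, hle, le_trans ?_ (h.mul_scale_le_scale_succ n a), hbefore⟩
  exact mul_le_mul_of_nonneg_left (hbefore n n.lt_succ_self).le h.pos.le

theorem diam_image_le (h : IsCylinderScale φ X c L m q ℓ) {Y : Set E} (hYX : Y ⊆ X)
    (hY : Y.Nonempty) (n : ℕ) (a : ℕ → A) : diam (wordMap φ n a '' Y) ≤ L * ℓ n a :=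
  diam_le_of_forall_dist_le_of_nonempty (hY.image _) <| Set.forall_mem_image.2 fun x hx =>
    Set.forall_mem_image.2 fun y hy => h.dist_le_mul_scale n a x (hYX hx) y (hYX hy)

theorem scale_le_diam_image (h : IsCylinderScale φ X c L m q ℓ) {Y : Set E} (hYX : Y ⊆ X)
    {x y : E} (hx : x ∈ Y) (hy : y ∈ Y) (hxy : c ≤ dist x y) (n : ℕ) (a : ℕ → A) :
    ℓ n a ≤ diam (wordMap φ n a '' Y) := by
  have hbdd : Bornology.IsBounded (wordMap φ n a '' Y) :=
    isBounded_iff.2 ⟨L * ℓ n a, Set.forall_mem_image.2 fun x hx =>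
      Set.forall_mem_image.2 fun y hy => h.dist_le_mul_scale n a x (hYX hx) y (hYX hy)⟩
  exact (h.scale_le_dist n a x (hYX hx) y (hYX hy) hxy).trans
    (dist_le_diam_of_mem hbdd (Set.mem_image_of_mem _ hx) (Set.mem_image_of_mem _ hy))

theorem image_subset_closedBall (h : IsCylinderScale φ X c L m q ℓ) {π : (ℕ → A) → E}
    (hπ : IsCoding φ X π) {Y : Set E} (hYX : Y ⊆ X) {n : ℕ} {a : ℕ → A} {r : ℝ}
    (hr : L * ℓ n a ≤ r) : wordMap φ n a '' Y ⊆ closedBall (π a) r := by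
  rintro _ ⟨y, hy, rfl⟩
  rw [mem_closedBall, ← hπ.wordMap_shift n a]
  exact (h.dist_le_mul_scale n a y (hYX hy) _ (hπ.mem _)).trans hr

variable {π : (ℕ → A) → E} {Ab : A → Set A}

theorem eq_of_dist_le (h : IsCylinderScale φ X c L m q ℓ) (hπ : IsCoding φ X π)
    (hsep : ∀ b, ∀ a ∈ cylSet Ab b, ∀ a' ∈ cylSet Ab b, a 0 ≠ a' 0 → c ≤ dist (π a) (π a'))
    {a a' b : ℕ → A} (ha : a ∈ cylSet Ab b) (ha' : a' ∈ cylSet Ab b) {s : ℝ} {N : ℕ}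
    (hs : ∀ j < N, s < ℓ j a) (hdist : dist (π a) (π a') ≤ s) : ∀ j < N, a j = a' j := by
  intro j
  induction j using Nat.strong_induction_on with
  | h j ih =>
    intro hj
    by_contra hne
    have hfar : c ≤ dist (π fun i => a (i + j)) (π fun i => a' (i + j)) :=
      hsep _ _ (shift_mem_cylSet ha j) _ (shift_mem_cylSet ha' j) (by simpa using hne)
    have hle := h.scale_le_dist j a _ (hπ.mem _) _ (hπ.mem _) hfar
    have hcongr : wordMap φ j a = wordMap φ j a' :=
      wordMap_congr φ fun i hi => ih i hi (hi.trans hj)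
    rw [hπ.wordMap_shift, hcongr, hπ.wordMap_shift] at hle
    exact ((hs j hj).trans_le hle).not_ge hdist

theorem closedBall_inter_subset_image (h : IsCylinderScale φ X c L m q ℓ) (hπ : IsCoding φ X π)
    (hsep : ∀ b, ∀ a ∈ cylSet Ab b, ∀ a' ∈ cylSet Ab b, a 0 ≠ a' 0 → c ≤ dist (π a) (π a'))
    {a b : ℕ → A} (ha : a ∈ cylSet Ab b) {s : ℝ} {N : ℕ} (hs : ∀ j < N, s < ℓ j a) :
    closedBall (π a) s ∩ π '' cylSet Ab b ⊆
      wordMap φ N a '' (π '' cylSet Ab fun n => b (n + N)) := by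
  rintro _ ⟨hdist, a', ha', rfl⟩
  rw [mem_closedBall'] at hdist
  rw [wordMap_congr φ (h.eq_of_dist_le hπ hsep ha ha' hs hdist)]
  exact ⟨_, Set.mem_image_of_mem π (shift_mem_cylSet ha' N), hπ.wordMap_shift N a'⟩

theorem exists_pow_le (h : IsCylinderScale φ X c L m q ℓ) : ∃ k ≥ 1, 2 * L ^ 2 * q ^ k ≤ 1 := by
  have hL := h.one_le
  obtain ⟨k, hk⟩ := exists_pow_lt_of_lt_one (show 0 < (2 * L ^ 2)⁻¹ by positivity) h.lt_one
  refine ⟨k, Nat.one_le_iff_ne_zero.2 ?_, ?_⟩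
  · rintro rfl
    rw [pow_zero, lt_inv_comm₀ one_pos (by positivity), inv_one] at hk
    nlinarith
  · rw [← le_div_iff₀' (by positivity), one_div]
    exact hk.le

theorem exists_stopping_times (h : IsCylinderScale φ X c L m q ℓ) {k : ℕ}
    (hk : 2 * L ^ 2 * q ^ k ≤ 1) {r : ℝ} (hr : 0 < r) (hrc : 2 * r < c) (a : ℕ → A) :
    ∃ N ≥ 1, (∀ j < N, 2 * r < ℓ j a) ∧ L * ℓ (N + k) a ≤ r ∧
      ∀ n ∈ ({N, N + k} : Set ℕ), ℓ n a ∈ Set.Icc (m ^ (k + 1) * (2 * r)) (2 * r) := by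
  have hL := h.one_le
  have hm := h.pos
  obtain ⟨N, hN, hle, hge, hbefore⟩ := h.exists_stopping_time (by positivity) hrc a
  have hsmall : L * ℓ (N + k) a ≤ r :=
    calc L * ℓ (N + k) a
      _ ≤ L * (L * q ^ k * ℓ N a) := by
        gcongr
        exact h.scale_add_le N k a
      _ ≤ L * (L * q ^ k * (2 * r)) := by
        have := h.nonneg
        gcongr
      _ = 2 * L ^ 2 * q ^ k * r := by ring
      _ ≤ r := mul_le_of_le_one_left hr.le hk
  have hge_add : m ^ (k + 1) * (2 * r) ≤ ℓ (N + k) a := by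
    rw [pow_succ, mul_assoc]
    exact (mul_le_mul_of_nonneg_left hge (by positivity)).trans (h.pow_mul_scale_le N k a)
  have hge_self : m ^ (k + 1) * (2 * r) ≤ ℓ N a :=
    le_trans (by gcongr; exact pow_le_of_le_one hm.le h.le_one k.succ_ne_zero) hge
  have hnonneg : 0 ≤ ℓ (N + k) a := le_trans (by positivity) hge_add
  have hle_add : ℓ (N + k) a ≤ 2 * r := by
    linarith [le_mul_of_one_le_left hnonneg hL]
  refine ⟨N, hN, hbefore, hsmall, ?_⟩
  rintro n (rfl | rfl)
  · exact ⟨hge_self, hle⟩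
  · exact ⟨hge_add, hle_add⟩

theorem diam_image_coding_mem_Icc (h : IsCylinderScale φ X c L m q ℓ) (hπ : IsCoding φ X π)
    (hAb : ∀ b, (Ab b).Nontrivial)
    (hsep : ∀ b, ∀ a ∈ cylSet Ab b, ∀ a' ∈ cylSet Ab b, a 0 ≠ a' 0 → c ≤ dist (π a) (π a'))
    {n : ℕ} {a : ℕ → A} {s r : ℝ} (hs : 0 < s) (hs₁ : s ≤ 1) (hr : 0 ≤ r)
    (hscale : ℓ n a ∈ Set.Icc (s * (2 * r)) (2 * r)) (b : ℕ → A) :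
    r / (2 * L / s) ≤ diam (wordMap φ n a '' (π '' cylSet Ab b)) ∧
      diam (wordMap φ n a '' (π '' cylSet Ab b)) ≤ 2 * L / s * r := by
  have hL := h.one_le
  have hsub := hπ.image_subset (cylSet Ab b)
  obtain ⟨u, hu, v, hv, huv⟩ := exists_mem_cylSet_ne hAb b
  have hu' := Set.mem_image_of_mem π hu
  constructor
  · calc r / (2 * L / s)
      _ = s * r / (2 * L) := by field_simp
      _ ≤ s * r := div_le_self (by positivity) (by linarith)
      _ ≤ s * (2 * r) := by gcongr; linarith
      _ ≤ ℓ n a := hscale.1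
      _ ≤ _ := h.scale_le_diam_image hsub hu' (Set.mem_image_of_mem π hv)
        (hsep b u hu v hv huv) n a
  · calc diam (wordMap φ n a '' (π '' cylSet Ab b))
      _ ≤ L * ℓ n a := h.diam_image_le hsub ⟨_, hu'⟩ n a
      _ ≤ L * (2 * r) := by gcongr; exact hscale.2
      _ = 2 * L * r := by ring
      _ ≤ 2 * L / s * r := by gcongr; exact le_div_self (by positivity) hs hs₁

end IsCylinderScale

theorem approximation_lemma_general {V : Type*} [NormedAddCommGroup V] [InnerProductSpace ℝ V]
    [FiniteDimensional ℝ V] {A : Type*} [Fintype A] (φ : A → V → V) (hΦ : IsSelfConformalIFS φ)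
    (X : Set V) (hXne : X.Nonempty) (hXc : IsCompact X) (hmaps : ∀ a, Set.MapsTo (φ a) X X)
    (codingMap : (ℕ → A) → V)
    (hCoding : ∀ (a : ℕ → A) (x₀ : V),
      Tendsto (fun n => wordMap φ n a x₀) atTop (𝓝 (codingMap a)))
    (Ab : A → Set A) (hAb : ∀ b, (Ab b).Nontrivial)
    (c₁ : ℝ) (hc₁ : 0 < c₁)
    (hsep : ∀ b : A, ∀ a ∈ Ab b, ∀ a' ∈ Ab b, a ≠ a' →
      c₁ ≤ setDist (φ a '' X) (φ a' '' X)) :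
    ∃ (M : ℕ) (D : ℝ), 1 ≤ D ∧
      ∀ (b : ℕ → A) (r : ℝ), 0 < r → r < c₁ / 2 →
        ∀ x ∈ codingMap '' cylSet Ab b,
          ∃ a ∈ cylSet Ab b, ∃ N₁ N₂ : ℕ,
            1 ≤ N₁ ∧ N₁ < N₂ ∧ N₂ - N₁ ≤ M ∧
            (r / D ≤ diam
                (wordMap φ N₁ a '' (codingMap '' cylSet Ab fun n => b (n + N₁))) ∧
              diam
                (wordMap φ N₁ a '' (codingMap '' cylSet Ab fun n => b (n + N₁))) ≤ D * r) ∧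
            (r / D ≤ diam
                (wordMap φ N₂ a '' (codingMap '' cylSet Ab fun n => b (n + N₂))) ∧
              diam
                (wordMap φ N₂ a '' (codingMap '' cylSet Ab fun n => b (n + N₂))) ≤ D * r) ∧
            closedBall x (2 * r) ∩ (codingMap '' cylSet Ab b) ⊆
              wordMap φ N₁ a '' (codingMap '' cylSet Ab fun n => b (n + N₁)) ∧
            wordMap φ N₂ a '' (codingMap '' cylSet Ab fun n => b (n + N₂)) ⊆
              closedBall x r := by
  obtain ⟨L, m, q, ℓ, hℓ⟩ := hΦ.exists_isCylinderScale hXc.isBounded hc₁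
  have hcoding : IsCoding φ X codingMap :=
    isCoding_of_tendsto (fun n a => (contDiff_wordMap hΦ.2.2.1 n a).continuous) hXc.isClosed hXne
      hmaps hCoding
  have hfar : ∀ b, ∀ a ∈ cylSet Ab b, ∀ a' ∈ cylSet Ab b, a 0 ≠ a' 0 →
      c₁ ≤ dist (codingMap a) (codingMap a') := fun b a ha a' ha' => hcoding.le_dist hsep ha ha'
  obtain ⟨k, hk, hkq⟩ := hℓ.exists_pow_le
  have hs : 0 < m ^ (k + 1) := pow_pos hℓ.pos _
  have hs₁ : m ^ (k + 1) ≤ 1 := pow_le_one₀ hℓ.pos.le hℓ.le_one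
  refine ⟨k, 2 * L / m ^ (k + 1), (one_le_div hs).2 (by linarith [hℓ.one_le]), ?_⟩
  rintro b r hr hrc _ ⟨a, ha, rfl⟩
  obtain ⟨N, hN, hbefore, hsmall, hscale⟩ :=
    hℓ.exists_stopping_times hkq hr (by linarith) a
  refine ⟨a, ha, N, N + k, hN, by lia, by lia, ?_, ?_, ?_, ?_⟩
  · exact hℓ.diam_image_coding_mem_Icc hcoding hAb hfar hs hs₁ hr.le (hscale N (.inl rfl)) _
  · exact hℓ.diam_image_coding_mem_Icc hcoding hAb hfar hs hs₁ hr.le (hscale _ (.inr rfl)) _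
  · exact hℓ.closedBall_inter_subset_image hcoding hfar ha hbefore
  · exact hℓ.image_subset_closedBall hcoding (hcoding.image_subset _) hsmall

/-- Approximation lemma: locating balls between dynamical cylinders. -/
theorem approximation_lemma
    (d : ℕ) {A : Type*} [Fintype A]
    (φ : A → EuclideanSpace ℝ (Fin d) → EuclideanSpace ℝ (Fin d))
    (hΦ : IsSelfConformalIFS φ)
    (X : Set (EuclideanSpace ℝ (Fin d))) (hXne : X.Nonempty) (hXc : IsCompact X)
    (hXinv : X = ⋃ a, φ a '' X)
    (codingMap : (ℕ → A) → EuclideanSpace ℝ (Fin d))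
    (hCoding : ∀ (a : ℕ → A) (x₀ : EuclideanSpace ℝ (Fin d)),
      Filter.Tendsto (fun n => wordMap φ n a x₀) Filter.atTop (nhds (codingMap a)))
    (Ab : A → Set A) (hAb : ∀ b, (Ab b).Nontrivial)
    (c₁ : ℝ) (hc₁ : 0 < c₁)
    (hsep : ∀ b : A, ∀ a ∈ Ab b, ∀ a' ∈ Ab b, a ≠ a' →
      c₁ ≤ setDist (φ a '' X) (φ a' '' X)) :
    ∃ (M : ℕ) (D : ℝ), 1 ≤ D ∧
      ∀ (b : ℕ → A) (r : ℝ), 0 < r → r < c₁ / 2 →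
        ∀ x ∈ codingMap '' cylSet Ab b,
          ∃ a ∈ cylSet Ab b, ∃ N₁ N₂ : ℕ,
            1 ≤ N₁ ∧ N₁ < N₂ ∧ N₂ - N₁ ≤ M ∧
            (r / D ≤ Metric.diam
                (wordMap φ N₁ a '' (codingMap '' cylSet Ab fun n => b (n + N₁))) ∧
              Metric.diam
                (wordMap φ N₁ a '' (codingMap '' cylSet Ab fun n => b (n + N₁))) ≤ D * r) ∧
            (r / D ≤ Metric.diam
                (wordMap φ N₂ a '' (codingMap '' cylSet Ab fun n => b (n + N₂))) ∧
              Metric.diam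
                (wordMap φ N₂ a '' (codingMap '' cylSet Ab fun n => b (n + N₂))) ≤ D * r) ∧
            Metric.closedBall x (2 * r) ∩ (codingMap '' cylSet Ab b) ⊆
              wordMap φ N₁ a '' (codingMap '' cylSet Ab fun n => b (n + N₁)) ∧
            wordMap φ N₂ a '' (codingMap '' cylSet Ab fun n => b (n + N₂)) ⊆
              Metric.closedBall x r := by
  have hmaps : ∀ a, Set.MapsTo (φ a) X X := fun a x hx =>
    hXinv ▸ Set.mem_iUnion_of_mem a (Set.mem_image_of_mem (φ a) hx)
  exact approximation_lemma_general φ hΦ X hXne hXc hmaps codingMap hCoding Ab hAb c₁ hc₁ hsep
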